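/- Let n ≥ 3 and let P be a finite-volume non-compact right-angled convex hyperbolic n-polyhedron. Then ν(P) = a_{n−1}(P) + v_∞(P) ≥ 5 − 2n + 2·ν_{n−1}, where ν_{n−1} = sInf {a_{n−2}(Q) + v_∞(Q) : Q a finite-volume non-compact right-angled convex hyperbolic (n−1)-polyhedron}; in particular νₙ ≥ 5 − 2n + 2ν_{n−1}. -/

import Mathlib

open scoped BigOperators

noncomputable section

/-- The Minkowski bilinear form `⟨x,y⟩ = -x₀y₀ + x₁y₁ + ⋯ + xₙyₙ` on `ℝ^{n+1}`. -/
def mink {n : ℕ} (x y : Fin (n + 1) → ℝ) : ℝ :=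
  -(x 0 * y 0) + ∑ i : Fin n, x i.succ * y i.succ

/-- The hyperboloid model of the hyperbolic space `ℍⁿ`. -/
def Hyperboloid (n : ℕ) : Set (Fin (n + 1) → ℝ) :=
  {x | mink x x = -1 ∧ 0 < x 0}

/-- The Klein projection `x ↦ (x₁/x₀, …, xₙ/x₀)` of the hyperboloid onto the unit ball. -/
def kleinMap {n : ℕ} (x : Fin (n + 1) → ℝ) : EuclideanSpace ℝ (Fin n) :=
  WithLp.toLp 2 fun i => x i.succ / x 0

/-- Dimension of a subset of a real vector space: the rank of its vector span. -/
def sdim {n : ℕ} (s : Set (EuclideanSpace ℝ (Fin n))) : ℕ :=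
  Module.finrank ℝ (vectorSpan ℝ s)

/-- A convex hyperbolic `n`-polyhedron: a finite intersection of hyperbolic half-spaces
`H_{eᵢ}⁻ = {x : ⟨eᵢ,x⟩ ≤ 0}` (with `⟨eᵢ,eᵢ⟩ = 1`) having nonempty interior
(equivalently, its Klein-model image has nonempty interior in `ℝⁿ`). -/
structure HypPolyhedron (n : ℕ) where
  m : ℕ
  e : Fin m → (Fin (n + 1) → ℝ)
  unit : ∀ i, mink (e i) (e i) = 1
  nonempty_int :
    (interior (kleinMap '' {x ∈ Hyperboloid n | ∀ i, mink (e i) x ≤ 0})).Nonempty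

namespace HypPolyhedron

variable {n : ℕ} (P : HypPolyhedron n)

/-- The set of points of the polyhedron in the hyperboloid model. -/
def carrier : Set (Fin (n + 1) → ℝ) :=
  {x ∈ Hyperboloid n | ∀ i, mink (P.e i) x ≤ 0}

/-- `P̄`: the closure of the Klein-model image of the polyhedron in the closed unit ball. -/
def cl : Set (EuclideanSpace ℝ (Fin n)) :=
  closure (kleinMap '' P.carrier)

/-- The `k`-faces of `P`: the `k`-dimensional (nonempty) exposed faces of `P̄`. -/
def faces (k : ℕ) : Set (Set (EuclideanSpace ℝ (Fin n))) :=
  {F | IsExposed ℝ P.cl F ∧ F.Nonempty ∧ sdim F = k}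

/-- `a_k(P)`: the number of `k`-faces of `P`. -/
def a (k : ℕ) : ℕ := (P.faces k).ncard

/-- Vertices of `P`: the points of `0`-dimensional exposed faces of `P̄`. -/
def verts : Set (EuclideanSpace ℝ (Fin n)) :=
  {v | IsExposed ℝ P.cl {v}}

/-- Ideal vertices: vertices lying on the unit sphere. -/
def idealVerts : Set (EuclideanSpace ℝ (Fin n)) :=
  {v ∈ P.verts | ‖v‖ = 1}

/-- Finite vertices: vertices lying in the open unit ball. -/
def finiteVerts : Set (EuclideanSpace ℝ (Fin n)) :=
  {v ∈ P.verts | ‖v‖ < 1}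

/-- `v_∞(P)`: the number of ideal vertices of `P`. -/
def vInf : ℕ := P.idealVerts.ncard

/-- The bounding hyperplane `H_e` contains the face `F`. -/
def faceInHyperplane (e : Fin (n + 1) → ℝ) (F : Set (EuclideanSpace ℝ (Fin n))) : Prop :=
  ∀ x ∈ P.carrier, kleinMap x ∈ F → mink e x = 0

/-- `P` is right-angled: whenever two distinct bounding hyperplanes both contain an
`(n-2)`-dimensional face of `P`, the corresponding unit normals are orthogonal,
i.e. the dihedral angle is `π/2`. -/
def IsRightAngled : Prop :=
  ∀ i j : Fin P.m, i ≠ j →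
    (∃ F ∈ P.faces (n - 2), P.faceInHyperplane (P.e i) F ∧ P.faceInHyperplane (P.e j) F) →
    mink (P.e i) (P.e j) = 0

/-- `P` has finite volume: `P̄` is the convex hull of its (finitely many) vertices. -/
def FiniteVolume : Prop :=
  P.verts.Finite ∧ P.cl = convexHull ℝ P.verts

/-- `P` is compact: finite volume and all vertices are finite. -/
def IsCompactPoly : Prop :=
  P.FiniteVolume ∧ ∀ v ∈ P.verts, ‖v‖ < 1

/-- `P` is ideal: finite volume and all vertices are ideal. -/
def IsIdeal : Prop :=
  P.FiniteVolume ∧ ∀ v ∈ P.verts, ‖v‖ = 1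

end HypPolyhedron

/-- `ν(P) = a_{n-1}(P) + v_∞(P)` ranging over the family `𝒫ⁿ` of finite-volume non-compact
right-angled convex hyperbolic `n`-polyhedra. -/
def nuSet (n : ℕ) : Set ℕ :=
  {m | ∃ P : HypPolyhedron n,
        P.FiniteVolume ∧ P.IsRightAngled ∧ ¬ P.IsCompactPoly ∧ P.a (n - 1) + P.vInf = m}

/-- `νₙ = sInf {ν(P) : P ∈ 𝒫ⁿ}` (with `sInf ∅ = 0`). -/
def nu (n : ℕ) : ℕ := sInf (nuSet n)

/-!
Let `v` be an ideal vertex of `P`. Some wall `i` passes through `v`, and finite volume forces a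
second one `j`, not orthogonal to `i`. In a right-angled polyhedron the normals of two walls have
inner product `0` or at most `-1`, so these two walls are parallel: `eᵢ + eⱼ` is a multiple of the
null vector of `v`. Both facets are polyhedra of the family one dimension lower, and the facets of
the facet on `i` are cut out by walls orthogonal to `i`. The ideal vertices of the two facets
overlap in `v` only. The walls orthogonal to both `i` and `j` pass through `v`; in the Euclidean
geometry of a horosphere at `v` their unit normals lie in a space of dimension `n - 2` and have
pairwise inner products `0` or `-1`, so there are at most `2(n - 2)` of them. Since `i` and `j`
themselves are orthogonal to neither, inclusion-exclusion gives
`2νₙ₋₁ ≤ (aₙ₋₁(P) - 2 + 2(n - 2)) + (v_∞(P) + 1)`.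
-/

namespace Hyperbolic

open Filter Metric Module Topology

/-! ### Minkowski space -/

section Minkowski

variable {n : ℕ}

/-- The Minkowski form as a bilinear form, from which `mink` inherits its algebra. -/
def minkBilin (n : ℕ) : LinearMap.BilinForm ℝ (Fin (n + 1) → ℝ) :=
  LinearMap.mk₂ ℝ mink
    (fun x y z => by simp only [mink, Pi.add_apply, add_mul, Finset.sum_add_distrib]; ring)
    (fun c x y => by
      simp only [mink, Pi.smul_apply, smul_eq_mul, mul_assoc, ← Finset.mul_sum]; ring)
    (fun x y z => by simp only [mink, Pi.add_apply, mul_add, Finset.sum_add_distrib]; ring)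
    (fun c x y => by
      simp only [mink, Pi.smul_apply, smul_eq_mul, mul_left_comm _ c, ← Finset.mul_sum]; ring)

/-- The spatial part `(x₁, …, xₙ)` of a vector of Minkowski space. -/
def spatial : (Fin (n + 1) → ℝ) →ₗ[ℝ] EuclideanSpace ℝ (Fin n) where
  toFun x := WithLp.toLp 2 fun i => x i.succ
  map_add' _ _ := rfl
  map_smul' _ _ := rfl

/-- The representative in the affine chart `x₀ = 1` of a point of the Klein model. -/
def kleinLift (y : EuclideanSpace ℝ (Fin n)) : Fin (n + 1) → ℝ :=
  Fin.cons 1 y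

/-- The open cone of future timelike vectors. -/
def futureCone (n : ℕ) : Set (Fin (n + 1) → ℝ) := {x | ‖spatial x‖ < x 0}

/-- The closed cone of future causal (timelike or lightlike) vectors, with its apex. -/
def causalCone (n : ℕ) : Set (Fin (n + 1) → ℝ) := {x | ‖spatial x‖ ≤ x 0}

/-- The set of nonzero future lightlike vectors, the rays of which are the ideal points. -/
def lightCone (n : ℕ) : Set (Fin (n + 1) → ℝ) := {x | 0 < x 0 ∧ ‖spatial x‖ = x 0}

variable {u v w x y z : Fin (n + 1) → ℝ}

@[simp] lemma spatial_apply (x : Fin (n + 1) → ℝ) (i : Fin n) : spatial x i = x i.succ := rfl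

lemma spatial_ext (h₀ : x 0 = y 0) (h : spatial x = spatial y) : x = y := by
  funext i
  refine Fin.cases h₀ (fun j => ?_) i
  exact congrArg (fun v : EuclideanSpace ℝ (Fin n) => v j) h

lemma continuous_spatial :
    Continuous (spatial : (Fin (n + 1) → ℝ) → EuclideanSpace ℝ (Fin n)) :=
  LinearMap.continuous_of_finiteDimensional spatial

lemma mink_comm (x y : Fin (n + 1) → ℝ) : mink x y = mink y x := by
  simp only [mink, mul_comm]

@[simp] lemma mink_add_right (x y z : Fin (n + 1) → ℝ) :
    mink x (y + z) = mink x y + mink x z := map_add (minkBilin n x) y z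

@[simp] lemma mink_sub_right (x y z : Fin (n + 1) → ℝ) :
    mink x (y - z) = mink x y - mink x z := map_sub (minkBilin n x) y z

@[simp] lemma mink_smul_right (c : ℝ) (x y : Fin (n + 1) → ℝ) :
    mink x (c • y) = c * mink x y := map_smul (minkBilin n x) c y

@[simp] lemma mink_neg_right (x y : Fin (n + 1) → ℝ) : mink x (-y) = -mink x y :=
  map_neg (minkBilin n x) y

@[simp] lemma mink_add_left (x y z : Fin (n + 1) → ℝ) :
    mink (x + y) z = mink x z + mink y z := (minkBilin n).map_add₂ x y z

@[simp] lemma mink_sub_left (x y z : Fin (n + 1) → ℝ) :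
    mink (x - y) z = mink x z - mink y z := (minkBilin n).map_sub₂ x y z

@[simp] lemma mink_smul_left (c : ℝ) (x y : Fin (n + 1) → ℝ) :
    mink (c • x) y = c * mink x y := (minkBilin n).map_smul₂ c x y

@[simp] lemma mink_neg_left (x y : Fin (n + 1) → ℝ) : mink (-x) y = -mink x y :=
  (minkBilin n).map_neg₂ x y

@[simp] lemma mink_zero_left (x : Fin (n + 1) → ℝ) : mink 0 x = 0 := (minkBilin n).map_zero₂ x

lemma continuous_mink (x : Fin (n + 1) → ℝ) : Continuous (mink x) :=
  (minkBilin n x).continuous_of_finiteDimensional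

lemma isOpen_setOf_mink_neg (e : Fin (n + 1) → ℝ) : IsOpen {x | mink e x < 0} :=
  isOpen_lt (continuous_mink e) continuous_const

lemma mink_eq_inner (x y : Fin (n + 1) → ℝ) :
    mink x y = -(x 0 * y 0) + inner ℝ (spatial x) (spatial y) := by
  simp [mink, PiLp.inner_apply, mul_comm]

lemma mink_self (x : Fin (n + 1) → ℝ) : mink x x = ‖spatial x‖ ^ 2 - x 0 ^ 2 := by
  rw [mink_eq_inner, real_inner_self_eq_norm_sq]; ring

lemma inner_spatial_of_mink_eq_zero (h : mink x y = 0) :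
    inner ℝ (spatial x) (spatial y) = x 0 * y 0 := by
  rw [mink_eq_inner] at h; linarith

lemma ne_zero_of_mink_self_eq_one (hx : mink x x = 1) : x ≠ 0 := by
  rintro rfl; simp at hx

lemma spatial_ne_zero (hx : mink x x = 1) : spatial x ≠ 0 := by
  intro h
  rw [mink_self, h, norm_zero] at hx
  nlinarith [sq_nonneg (x 0)]

/-! ### Future cones -/

lemma futureCone_subset_causalCone : futureCone n ⊆ causalCone n :=
  fun x hx => le_of_lt (show ‖spatial x‖ < x 0 from hx)

lemma pos_of_mem_futureCone (hx : x ∈ futureCone n) : 0 < x 0 :=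
  (norm_nonneg _).trans_lt hx

lemma mem_futureCone_iff : x ∈ futureCone n ↔ mink x x < 0 ∧ 0 < x 0 := by
  rw [mink_self, sub_neg]
  refine ⟨fun hx => ⟨pow_lt_pow_left₀ hx (norm_nonneg _) two_ne_zero, pos_of_mem_futureCone hx⟩,
    fun ⟨hx, hx₀⟩ => lt_of_pow_lt_pow_left₀ 2 hx₀.le hx⟩

lemma isOpen_futureCone : IsOpen (futureCone n) :=
  isOpen_lt continuous_spatial.norm (continuous_apply 0)

lemma smul_mem_futureCone (hx : x ∈ futureCone n) {c : ℝ} (hc : 0 < c) :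
    c • x ∈ futureCone n := by
  change ‖spatial (c • x)‖ < c * x 0
  rw [map_smul, norm_smul, Real.norm_of_nonneg hc.le]
  exact mul_lt_mul_of_pos_left hx hc

lemma convexOn_norm_spatial_sub :
    ConvexOn ℝ Set.univ fun x : Fin (n + 1) → ℝ => ‖spatial x‖ - x 0 :=
  (convexOn_univ_norm.comp_linearMap spatial).sub
    ((LinearMap.proj (R := ℝ) (φ := fun _ : Fin (n + 1) => ℝ) 0).concaveOn convex_univ)

lemma convex_futureCone : Convex ℝ (futureCone n) := by
  simpa [futureCone] using convexOn_norm_spatial_sub.convex_lt (0 : ℝ)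

lemma mink_self_nonpos (hx : x ∈ causalCone n) : mink x x ≤ 0 := by
  rw [mink_self, sub_nonpos]
  exact pow_le_pow_left₀ (norm_nonneg _) hx 2

lemma add_smul_mem_futureCone (hz : z ∈ causalCone n) (hw : w ∈ futureCone n) {t : ℝ}
    (ht : 0 < t) : z + t • w ∈ futureCone n := by
  change ‖spatial (z + t • w)‖ < z 0 + (t • w) 0
  rw [map_add]
  exact (norm_add_le _ _).trans_lt (add_lt_add_of_le_of_lt hz (smul_mem_futureCone hw ht))

lemma mink_neg (hx : x ∈ futureCone n) (hy : y ∈ causalCone n) (hy₀ : 0 < y 0) :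
    mink x y < 0 := by
  rw [mink_eq_inner]
  have hle : inner ℝ (spatial x) (spatial y) ≤ ‖spatial x‖ * y 0 :=
    (real_inner_le_norm _ _).trans (mul_le_mul_of_nonneg_left hy (norm_nonneg _))
  linarith [mul_lt_mul_of_pos_right (show ‖spatial x‖ < x 0 from hx) hy₀]

lemma mem_futureCone_of_mink_neg (hx : x ∈ futureCone n) (hy : mink y y < 0)
    (hxy : mink x y < 0) : y ∈ futureCone n := by
  refine mem_futureCone_iff.2 ⟨hy, ?_⟩
  by_contra! hle
  have hne : y 0 ≠ 0 := by
    intro h₀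
    rw [mink_self, h₀] at hy
    nlinarith [norm_nonneg (spatial y)]
  have hpos : 0 < (-y) 0 := neg_pos.2 (lt_of_le_of_ne hle hne)
  have hfut : -y ∈ futureCone n := mem_futureCone_iff.2 ⟨by simpa using hy, hpos⟩
  have := mink_neg hx (futureCone_subset_causalCone hfut) hpos
  rw [mink_neg_right] at this
  linarith

lemma mink_self_of_mem_lightCone (hx : x ∈ lightCone n) : mink x x = 0 := by
  rw [mink_self, hx.2, sub_self]

lemma mem_lightCone_iff_mink (hw : w ∈ futureCone n) :
    x ∈ lightCone n ↔ mink x x = 0 ∧ mink w x < 0 := by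
  constructor
  · exact fun hx => ⟨mink_self_of_mem_lightCone hx, mink_neg hw hx.2.le hx.1⟩
  · rintro ⟨hxx, hwx⟩
    have hsq : ‖spatial x‖ = |x 0| := by
      rw [← abs_norm, ← sq_eq_sq_iff_abs_eq_abs]
      rw [mink_self] at hxx
      linarith
    have hx₀ : 0 < x 0 := by
      by_contra! hle
      rcases hle.lt_or_eq with hlt | heq
      · have hneg : mink w (-x) < 0 := mink_neg hw
          (show ‖spatial (-x)‖ ≤ (-x) 0 by rw [map_neg, norm_neg, hsq, abs_of_neg hlt]; rfl)
          (neg_pos.2 hlt)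
        rw [mink_neg_right] at hneg
        linarith
      · rw [mink_eq_inner, norm_eq_zero.1 (hsq.trans (by rw [heq, abs_zero])), heq] at hwx
        simp at hwx
    exact ⟨hx₀, hsq.trans (abs_of_pos hx₀)⟩

lemma mink_self_pos (hw : w ∈ futureCone n) (hu : u ≠ 0) (h : mink u w = 0) :
    0 < mink u u := by
  have hw₀ := pos_of_mem_futureCone hw
  rw [mink_self, sub_pos, sq_lt_sq, abs_norm]
  rcases eq_or_ne (spatial u) 0 with hs | hs
  · have hu₀ : u 0 = 0 := by
      simpa [hs, hw₀.ne'] using (inner_spatial_of_mink_eq_zero h).symm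
    exact absurd (spatial_ext (by simpa using hu₀) (by simpa using hs)) hu
  · refine lt_of_mul_lt_mul_right ?_ hw₀.le
    calc |u 0| * w 0 = |inner ℝ (spatial u) (spatial w)| := by
          rw [inner_spatial_of_mink_eq_zero h, abs_mul, abs_of_pos hw₀]
      _ ≤ ‖spatial u‖ * ‖spatial w‖ := abs_real_inner_le_norm _ _
      _ < ‖spatial u‖ * w 0 := mul_lt_mul_of_pos_left hw (norm_pos_iff.2 hs)

/-! ### Lightlike vectors and horospheres -/

/-- For lightlike `z`, the projection of `z^⊥` along `z` onto the Euclidean space orthogonal to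
`spatial z`; it is an isometry modulo `z`, so that walls through an ideal point become Euclidean
hyperplanes in a horosphere. -/
def horoProj (z u : Fin (n + 1) → ℝ) : EuclideanSpace ℝ (Fin n) :=
  spatial u - (u 0 / z 0) • spatial z

lemma inner_horoProj_spatial (hz : z ∈ lightCone n) (hu : mink u z = 0) :
    inner ℝ (horoProj z u) (spatial z) = 0 := by
  rw [horoProj, inner_sub_left, real_inner_smul_left, inner_spatial_of_mink_eq_zero hu,
    real_inner_self_eq_norm_sq, hz.2, sq, ← mul_assoc, div_mul_cancel₀ _ hz.1.ne', sub_self]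

lemma inner_horoProj (hz : z ∈ lightCone n) (hu : mink u z = 0) (hv : mink v z = 0) :
    inner ℝ (horoProj z u) (horoProj z v) = mink u v := by
  have hz₀ := hz.1.ne'
  have hvz := inner_spatial_of_mink_eq_zero hv
  calc inner ℝ (horoProj z u) (horoProj z v) = inner ℝ (horoProj z u) (spatial v) := by
        rw [horoProj.eq_1 z v, inner_sub_right, inner_smul_right, inner_horoProj_spatial hz hu,
          mul_zero, sub_zero]
    _ = mink u v := by
        rw [horoProj, inner_sub_left, real_inner_smul_left, real_inner_comm _ (spatial z), hvz,
          mink_eq_inner]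
        field_simp
        ring

lemma mink_self_nonneg_of_lightCone (hz : z ∈ lightCone n) (hu : mink u z = 0) :
    0 ≤ mink u u := by
  rw [← inner_horoProj hz hu hu]; exact real_inner_self_nonneg

lemma norm_horoProj (hz : z ∈ lightCone n) (hu : mink u z = 0) (hu₁ : mink u u = 1) :
    ‖horoProj z u‖ = 1 := by
  rw [norm_eq_sqrt_real_inner, inner_horoProj hz hu hu, hu₁, Real.sqrt_one]

lemma eq_smul_of_mink_self_eq_zero (hz : z ∈ lightCone n) (hu : mink u z = 0)
    (hu₀ : mink u u = 0) : u = (u 0 / z 0) • z := by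
  have hs : horoProj z u = 0 := by
    rw [← inner_self_eq_zero (𝕜 := ℝ), inner_horoProj hz hu hu, hu₀]
  refine spatial_ext ?_ (by simpa [horoProj, sub_eq_zero] using hs)
  simp [hz.1.ne']

/-- Two walls through an ideal point that do not meet inside hyperbolic space are tangent there. -/
lemma exists_add_eq_smul (hz : z ∈ lightCone n) (hu : mink u z = 0) (hv : mink v z = 0)
    (hu₁ : mink u u = 1) (hv₁ : mink v v = 1) (huv : mink u v ≤ -1) :
    ∃ c : ℝ, u + v = c • z := by
  have hsum : mink (u + v) z = 0 := by rw [mink_add_left, hu, hv, add_zero]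
  have hself : mink (u + v) (u + v) = 2 + 2 * mink u v := by
    simp only [mink_add_left, mink_add_right, hu₁, hv₁, mink_comm v u]; ring
  have hnonneg := mink_self_nonneg_of_lightCone hz hsum
  exact ⟨_, eq_smul_of_mink_self_eq_zero hz hsum (by linarith)⟩

/-! ### The Klein chart -/

@[simp] lemma kleinLift_zero (y : EuclideanSpace ℝ (Fin n)) : kleinLift y 0 = 1 := rfl

@[simp] lemma spatial_kleinLift (y : EuclideanSpace ℝ (Fin n)) : spatial (kleinLift y) = y := by
  ext i; simp [kleinLift]

lemma mink_kleinLift (e : Fin (n + 1) → ℝ) (y : EuclideanSpace ℝ (Fin n)) :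
    mink e (kleinLift y) = inner ℝ (spatial e) y - e 0 := by
  rw [mink_eq_inner, kleinLift_zero, spatial_kleinLift]; ring

lemma kleinLift_mem_futureCone {y : EuclideanSpace ℝ (Fin n)} :
    kleinLift y ∈ futureCone n ↔ ‖y‖ < 1 := by
  simp [futureCone]

lemma kleinLift_mem_lightCone {y : EuclideanSpace ℝ (Fin n)} :
    kleinLift y ∈ lightCone n ↔ ‖y‖ = 1 := by
  simp [lightCone]

lemma kleinMap_eq (x : Fin (n + 1) → ℝ) : kleinMap x = (x 0)⁻¹ • spatial x := by
  ext i; simp [kleinMap, div_eq_inv_mul]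

@[simp] lemma kleinMap_kleinLift (y : EuclideanSpace ℝ (Fin n)) : kleinMap (kleinLift y) = y := by
  simp [kleinMap_eq]

lemma kleinMap_smul {c : ℝ} (hc : c ≠ 0) (x : Fin (n + 1) → ℝ) :
    kleinMap (c • x) = kleinMap x := by
  ext i; simp [kleinMap, mul_div_mul_left _ _ hc]

lemma kleinLift_kleinMap (hx : x 0 ≠ 0) : kleinLift (kleinMap x) = (x 0)⁻¹ • x := by
  apply spatial_ext
  · simp [hx]
  · rw [spatial_kleinLift, kleinMap_eq, map_smul]

lemma norm_kleinMap (hx : 0 < x 0) : ‖kleinMap x‖ = ‖spatial x‖ / x 0 := by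
  rw [kleinMap_eq, norm_smul, norm_inv, Real.norm_of_nonneg hx.le, div_eq_inv_mul]

lemma mink_kleinLift_kleinMap (hx : x 0 ≠ 0) (e : Fin (n + 1) → ℝ) :
    mink e (kleinLift (kleinMap x)) = (x 0)⁻¹ * mink e x := by
  rw [kleinLift_kleinMap hx, mink_smul_right]

lemma futureCone_nonempty (n : ℕ) : (futureCone n).Nonempty :=
  ⟨kleinLift 0, kleinLift_mem_futureCone.2 (by simp)⟩

end Minkowski

/-! ### Systems of half-spaces -/

section Chambers

lemma exists_irredundant {V ι : Type*} [AddCommGroup V] [Module ℝ V] [Finite ι] {X : Set V}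
    (hX : Convex ℝ X) (f : ι → V →ₗ[ℝ] ℝ) (I : Set ι) {p : V} (hp : p ∈ X)
    (hpI : ∀ k ∈ I, f k p < 0) :
    ∃ S ⊆ I, (∀ x ∈ X, (∀ k ∈ S, f k x ≤ 0) → ∀ k ∈ I, f k x ≤ 0) ∧
      ∀ j ∈ S, ∃ w ∈ X, f j w = 0 ∧ ∀ k ∈ S, k ≠ j → f k w < 0 := by
  obtain ⟨S, ⟨hSI, hS⟩, hmin⟩ := exists_minimal_of_wellFoundedLT
    (fun S : Set ι => S ⊆ I ∧ ∀ x ∈ X, (∀ k ∈ S, f k x ≤ 0) → ∀ k ∈ I, f k x ≤ 0)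
    ⟨I, Set.Subset.rfl, fun _ _ h => h⟩
  refine ⟨S, hSI, hS, fun j hj => ?_⟩
  obtain ⟨x, hx, hxS, hxj⟩ : ∃ x ∈ X, (∀ k ∈ S, k ≠ j → f k x ≤ 0) ∧ 0 < f j x := by
    by_contra! hno
    refine (hmin (y := S \ {j}) ⟨Set.sdiff_subset.trans hSI, fun x hx hxS => hS x hx fun k hk => ?_⟩
      Set.sdiff_subset hj).2 rfl
    have hxS' : ∀ l ∈ S, l ≠ j → f l x ≤ 0 := fun l hl hlj => hxS l ⟨hl, hlj⟩
    rcases eq_or_ne k j with rfl | hkj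
    · exact hno x hx hxS'
    · exact hxS' k hk hkj
  have hpj : 0 < -f j p := neg_pos.2 (hpI j (hSI hj))
  have hd : 0 < f j x + -f j p := add_pos hxj hpj
  refine ⟨(f j x / (f j x + -f j p)) • p + (-f j p / (f j x + -f j p)) • x,
    hX hp hx (by positivity) (by positivity) (by rw [← add_div, div_self hd.ne']), ?_, ?_⟩
  · simp only [map_add, map_smul, smul_eq_mul]
    ring
  · intro k hk hkj
    simp only [map_add, map_smul, smul_eq_mul]
    exact add_neg_of_neg_of_nonpos (mul_neg_of_pos_of_neg (by positivity) (hpI k (hSI hk)))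
      (mul_nonpos_of_nonneg_of_nonpos (by positivity) (hxS k hk hkj))

variable {n : ℕ} {ι : Type*} {e : ι → Fin (n + 1) → ℝ} {w x z : Fin (n + 1) → ℝ}

/-- The polyhedral cone in Minkowski space cut out by the half-spaces with outer normals `e k`. -/
def polyCone (e : ι → Fin (n + 1) → ℝ) : Set (Fin (n + 1) → ℝ) := {x | ∀ k, mink (e k) x ≤ 0}

lemma smul_mem_polyCone (hx : x ∈ polyCone e) {c : ℝ} (hc : 0 ≤ c) :
    c • x ∈ polyCone e := fun k => by
  rw [mink_smul_right]; exact mul_nonpos_of_nonneg_of_nonpos hc (hx k)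

lemma eventually_add_smul_mem {V : Type*} [AddCommGroup V] [Module ℝ V] [TopologicalSpace V]
    [ContinuousAdd V] [ContinuousSMul ℝ V] {s : Set V} (hs : IsOpen s) {w : V} (hw : w ∈ s)
    (x : V) : ∀ᶠ ε : ℝ in 𝓝[>] 0, w + ε • x ∈ s := by
  have hc : Continuous fun ε : ℝ => w + ε • x := by fun_prop
  have hlim : Tendsto (fun ε : ℝ => w + ε • x) (𝓝[>] 0) (𝓝 w) := by
    simpa using (hc.tendsto 0).mono_left nhdsWithin_le_nhds
  exact hlim.eventually (hs.mem_nhds hw)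

lemma eventually_add_smul_mem_polyCone [Finite ι] (hz : z ∈ polyCone e)
    (hx : ∀ k, mink (e k) z = 0 → mink (e k) x ≤ 0) :
    ∀ᶠ ε : ℝ in 𝓝[>] 0, z + ε • x ∈ polyCone e := by
  refine eventually_all.2 fun k => ?_
  rcases (hz k).lt_or_eq with hk | hk
  · exact (eventually_add_smul_mem (isOpen_setOf_mink_neg (e k)) hk x).mono fun ε hε => le_of_lt hε
  · filter_upwards [self_mem_nhdsWithin] with ε hε
    rw [mink_add_right, mink_smul_right, hk, zero_add]
    exact mul_nonpos_of_nonneg_of_nonpos (le_of_lt hε) (hx k hk)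

lemma mink_nonpos_of_forall_add_smul {u : Fin (n + 1) → ℝ}
    (h : ∀ t : ℝ, 0 < t → mink u (z + t • w) ≤ 0) : mink u z ≤ 0 := by
  by_contra! hpos
  have hopen : IsOpen {x | 0 < mink u x} := isOpen_lt continuous_const (continuous_mink u)
  obtain ⟨t, ht, ht₀⟩ := ((eventually_add_smul_mem hopen hpos w).and self_mem_nhdsWithin).exists
  exact (h t ht₀).not_gt ht

/-! ### Right-angled chambers -/

/-- `w` is a point of hyperbolic space relatively interior to the part of the polyhedron with
normals `e` which lies on all the hyperplanes with normals `u l`, that part having the dimension of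
their intersection. -/
structure IsRelInteriorPoint {κ : Type*} (e : ι → Fin (n + 1) → ℝ) (u : κ → Fin (n + 1) → ℝ)
    (w : Fin (n + 1) → ℝ) : Prop where
  mem_futureCone : w ∈ futureCone n
  mink_eq_zero : ∀ l, mink (u l) w = 0
  eventually_mem : ∀ x, (∀ l, mink (u l) x = 0) →
    ∀ᶠ ε : ℝ in 𝓝[>] 0, w + ε • x ∈ futureCone n ∩ polyCone e

lemma isRelInteriorPoint_of_tight [Finite ι] {κ : Type*} {u : κ → Fin (n + 1) → ℝ}
    (hw : w ∈ futureCone n) (hwe : w ∈ polyCone e) (hu : ∀ l, mink (u l) w = 0)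
    (htight : ∀ k, mink (e k) w = 0 → ∃ l, e k = u l) : IsRelInteriorPoint e u w where
  mem_futureCone := hw
  mink_eq_zero := hu
  eventually_mem x hx := (eventually_add_smul_mem isOpen_futureCone hw x).and <|
    eventually_add_smul_mem_polyCone hwe fun k hk => by
      obtain ⟨l, hl⟩ := htight k hk
      exact hl ▸ (hx l).le

/-- An irredundant system of walls of a polyhedron with interior points, right-angled in the sense
that two walls sharing a codimension two face are orthogonal. -/
structure Chamber (e : ι → Fin (n + 1) → ℝ) : Prop where
  unit : ∀ k, mink (e k) (e k) = 1
  interior : ∃ p ∈ futureCone n, ∀ k, mink (e k) p < 0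
  wall : ∀ k, ∃ w ∈ futureCone n, mink (e k) w = 0 ∧ ∀ l, l ≠ k → mink (e l) w < 0
  right_angle : ∀ i j, i ≠ j → ∀ w, IsRelInteriorPoint e ![e i, e j] w → mink (e i) (e j) = 0

lemma sub_smul_mem_futureCone {u : Fin (n + 1) → ℝ} (hx : x ∈ futureCone n) (hu : mink u u = 1) :
    x - mink u x • u ∈ futureCone n := by
  have hneg := (mem_futureCone_iff.1 hx).1
  have hsq := sq_nonneg (mink u x)
  refine mem_futureCone_of_mink_neg hx ?_ ?_ <;>
  · simp only [mink_sub_left, mink_sub_right, mink_smul_left, mink_smul_right, hu, mink_comm x u]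
    linarith

lemma exists_proj_codim_two {p u v : Fin (n + 1) → ℝ} (hp : p ∈ futureCone n)
    (hu : mink u u = 1) (hv : mink v v = 1) (huv : -1 < mink u v) (huv₀ : mink u v ≤ 0)
    (hup : mink u p ≤ 0) (hvp : mink v p ≤ 0) :
    ∃ a ≤ (0 : ℝ), ∃ b ≤ (0 : ℝ), p - a • u - b • v ∈ futureCone n ∧
      mink u (p - a • u - b • v) = 0 ∧ mink v (p - a • u - b • v) = 0 := by
  have hvu : mink v u = mink u v := mink_comm v u
  set g := mink u v
  have hd : 0 < 1 - g ^ 2 := by nlinarith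
  obtain ⟨a, ha⟩ : ∃ a, a = (mink u p - g * mink v p) / (1 - g ^ 2) := ⟨_, rfl⟩
  obtain ⟨b, hb⟩ : ∃ b, b = (mink v p - g * mink u p) / (1 - g ^ 2) := ⟨_, rfl⟩
  have ha₀ : a ≤ 0 := ha ▸ div_nonpos_of_nonpos_of_nonneg (by nlinarith) hd.le
  have hb₀ : b ≤ 0 := hb ▸ div_nonpos_of_nonpos_of_nonneg (by nlinarith) hd.le
  obtain ⟨q, hq⟩ : ∃ q, q = p - a • u - b • v := ⟨_, rfl⟩
  have huq : mink u q = 0 := by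
    simp only [hq, mink_sub_right, mink_smul_right, hu]
    rw [ha, hb]; field_simp; ring
  have hvq : mink v q = 0 := by
    simp only [hq, mink_sub_right, mink_smul_right, hv, hvu]
    rw [ha, hb]; field_simp; ring
  have hpq : mink p q < 0 := by
    simp only [hq, mink_sub_right, mink_smul_right, mink_comm p u, mink_comm p v]
    linarith [(mem_futureCone_iff.1 hp).1, mul_nonneg_of_nonpos_of_nonpos ha₀ hup,
      mul_nonneg_of_nonpos_of_nonpos hb₀ hvp]
  have hqq : mink q q = mink p q := by
    nth_rewrite 1 [hq]
    simp only [mink_sub_left, mink_smul_left, huq, hvq, mul_zero, sub_zero]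
  exact ⟨a, ha₀, b, hb₀, hq ▸ mem_futureCone_of_mink_neg hp (hqq ▸ hpq) hpq, hq ▸ huq, hq ▸ hvq⟩

namespace Chamber

lemma exists_mem_wall (h : Chamber e) (k : ι) :
    ∃ w ∈ futureCone n, w ∈ polyCone e ∧ mink (e k) w = 0 ∧ ∀ l, l ≠ k → mink (e l) w < 0 := by
  obtain ⟨w, hw, hwk, hwl⟩ := h.wall k
  refine ⟨w, hw, fun l => ?_, hwk, hwl⟩
  rcases eq_or_ne l k with rfl | hlk
  exacts [hwk.le, (hwl l hlk).le]

variable [Finite ι]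

/-- The facet on a wall is cut out of that wall by the walls orthogonal to it: a wall bounding the
facet is not redundant there, hence shares a codimension two face with the given one. -/
lemma cut_of_mem_futureCone (h : Chamber e) (i : ι) (hx : x ∈ futureCone n)
    (hxi : mink (e i) x = 0) (hxk : ∀ k, mink (e i) (e k) = 0 → mink (e k) x ≤ 0) :
    x ∈ polyCone e := by
  obtain ⟨p, hp, hpi, hpk⟩ := h.wall i
  obtain ⟨S, hSi, hcut, hwall⟩ := exists_irredundant
    (convex_futureCone.inter (convex_hyperplane (minkBilin n (e i)).isLinear 0))
    (fun k => minkBilin n (e k)) {i}ᶜ ⟨hp, hpi⟩ hpk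
  have hmem : ∀ y ∈ futureCone n, mink (e i) y = 0 → (∀ k ∈ S, mink (e k) y ≤ 0) →
      y ∈ polyCone e := fun y hy hyi hyS k => by
    rcases eq_or_ne k i with rfl | hki
    · exact hyi.le
    · exact hcut y ⟨hy, hyi⟩ hyS k hki
  have horth : ∀ j ∈ S, mink (e i) (e j) = 0 := fun j hj => by
    obtain ⟨w, ⟨hw, hwi⟩, hwj, hwk⟩ := hwall j hj
    have hwS : ∀ k : S, mink (e k) w = 0 → e k = e j := fun k hk => by
      by_contra hkj
      exact (hwk k k.2 fun hkj' => hkj (hkj' ▸ rfl)).ne hk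
    have hwj' : ∀ k : S, mink (e k) w ≤ 0 := fun k => by
      rcases eq_or_ne k.1 j with hkj | hkj
      · exact (hkj ▸ hwj).le
      · exact (hwk k k.2 hkj).le
    have hrel : IsRelInteriorPoint (fun k : S => e k) ![e i, e j] w :=
      isRelInteriorPoint_of_tight hw hwj' (Fin.forall_fin_two.2 ⟨hwi, hwj⟩)
        fun k hk => ⟨1, hwS k hk⟩
    refine h.right_angle i j (fun hij => hSi hj hij.symm) w
      ⟨hw, hrel.mink_eq_zero, fun x hx => (hrel.eventually_mem x hx).mono fun ε hε => ⟨hε.1,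
        hmem _ hε.1 ?_ fun k hk => hε.2 ⟨k, hk⟩⟩⟩
    rw [mink_add_right, mink_smul_right, show mink (e i) w = 0 from hwi,
      show mink (e i) x = 0 from hx 0, mul_zero, add_zero]
  exact hmem x hx hxi fun k hk => hxk k (horth k hk)

lemma cut (h : Chamber e) (i : ι) (hx : x ∈ causalCone n) (hxi : mink (e i) x = 0)
    (hxk : ∀ k, mink (e i) (e k) = 0 → mink (e k) x ≤ 0) : x ∈ polyCone e := by
  obtain ⟨w, hw, hwe, hwi, -⟩ := h.exists_mem_wall i
  refine fun k => mink_nonpos_of_forall_add_smul (w := w) fun t ht =>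
    h.cut_of_mem_futureCone i (add_smul_mem_futureCone hx hw ht) ?_ (fun l hl => ?_) k
  · rw [mink_add_right, mink_smul_right, hxi, hwi, mul_zero, add_zero]
  · rw [mink_add_right]
    exact add_nonpos (hxk l hl) (smul_mem_polyCone hwe ht.le l)

lemma proj_mem (h : Chamber e) (i : ι) (hx : x ∈ futureCone n) (hxe : x ∈ polyCone e) :
    x - mink (e i) x • e i ∈ polyCone e := by
  refine h.cut i (futureCone_subset_causalCone (sub_smul_mem_futureCone hx (h.unit i))) ?_ ?_
  · rw [mink_sub_right, mink_smul_right, h.unit, mul_one, sub_self]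
  · intro k hk
    rw [mink_sub_right, mink_smul_right, mink_comm _ (e i), hk, mul_zero, sub_zero]
    exact hxe k

lemma mink_nonpos (h : Chamber e) {i j : ι} (hij : i ≠ j) : mink (e i) (e j) ≤ 0 := by
  obtain ⟨w, hw, hwe, hwj, hwk⟩ := h.exists_mem_wall j
  have hproj := h.proj_mem i hw hwe j
  rw [mink_sub_right, mink_smul_right, hwj, zero_sub, neg_nonpos, mink_comm (e j)] at hproj
  exact nonpos_of_mul_nonneg_right hproj (hwk i hij)

lemma gram (h : Chamber e) {i j : ι} (hij : i ≠ j) :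
    mink (e i) (e j) = 0 ∨ mink (e i) (e j) ≤ -1 := by
  rw [or_iff_not_imp_right, not_le]
  intro hgt
  obtain ⟨p, hp, hpe⟩ := h.interior
  obtain ⟨a, ha, b, hb, hq, hqi, hqj⟩ := exists_proj_codim_two hp (h.unit i) (h.unit j) hgt
    (h.mink_nonpos hij) (hpe i).le (hpe j).le
  set q := p - a • e i - b • e j with hq_def
  have hlt : ∀ k, k ≠ i → k ≠ j → mink (e k) q < 0 := fun k hki hkj => by
    rw [hq_def, mink_sub_right, mink_sub_right, mink_smul_right, mink_smul_right]
    linarith [hpe k, mul_nonneg_of_nonpos_of_nonpos ha (h.mink_nonpos hki),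
      mul_nonneg_of_nonpos_of_nonpos hb (h.mink_nonpos hkj)]
  have htight : ∀ k, mink (e k) q = 0 → k = i ∨ k = j := fun k hk => by
    by_contra! hne
    exact (hlt k hne.1 hne.2).ne hk
  refine h.right_angle i j hij q (isRelInteriorPoint_of_tight hq (fun k => ?_)
    (Fin.forall_fin_two.2 ⟨hqi, hqj⟩) fun k hk => ?_)
  · by_cases hk : k = i ∨ k = j
    · rcases hk with rfl | rfl
      exacts [hqi.le, hqj.le]
    · push Not at hk
      exact (hlt k hk.1 hk.2).le
  · rcases htight k hk with rfl | rfl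
    exacts [⟨0, rfl⟩, ⟨1, rfl⟩]

end Chamber

end Chambers

/-! ### Exposed faces of convex sets and polytopes -/

section Convexity

lemma isExposed_sep_forall_eq {E κ : Type*} [TopologicalSpace E] [AddCommGroup E] [Module ℝ E]
    [Finite κ] {A : Set E} {f : κ → StrongDual ℝ E} {c : κ → ℝ}
    (hf : ∀ k, ∀ y ∈ A, f k y ≤ c k) : IsExposed ℝ A {y ∈ A | ∀ k, f k y = c k} := by
  cases nonempty_fintype κ
  rintro ⟨v, hv, hvk⟩
  refine ⟨∑ k, f k, Set.ext fun y => ?_⟩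
  simp only [Set.mem_ofPred_eq, sum_apply]
  refine and_congr_right fun hy => ⟨fun hyk x hx => ?_, fun hmax => ?_⟩
  · exact Finset.sum_le_sum fun k _ => (hyk k).symm ▸ hf k x hx
  · have hle : ∀ k ∈ Finset.univ, f k y ≤ f k v := fun k _ => (hvk k).symm ▸ hf k y hy
    have heq := (Finset.sum_eq_sum_iff_of_le hle).1
      (le_antisymm (Finset.sum_le_sum hle) (hmax v hv))
    exact fun k => (heq k (Finset.mem_univ k)).trans (hvk k)

section Polytope

variable {E ι : Type*} [TopologicalSpace E] [AddCommGroup E] [IsTopologicalAddGroup E] [Module ℝ E]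
  [ContinuousSMul ℝ E] [Finite ι] {f : ι → StrongDual ℝ E} {c : ι → ℝ} {v y : E}

lemma eq_of_mem_extremePoints_of_tight (hv : v ∈ {y | ∀ k, f k y ≤ c k}.extremePoints ℝ)
    (hy : ∀ k, f k y ≤ c k) (htight : ∀ k, f k v = c k → f k y = c k) : y = v := by
  have hnear : ∀ᶠ ε : ℝ in 𝓝[>] 0, v + ε • (v - y) ∈ {y | ∀ k, f k y ≤ c k} := by
    refine eventually_all.2 fun k => ?_
    rcases (hv.1 k).lt_or_eq with hk | hk
    · exact (eventually_add_smul_mem (isOpen_Iio.preimage (f k).continuous) hk (v - y)).mono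
        fun ε hε => le_of_lt hε
    · exact Eventually.of_forall fun ε => by simp [hk, htight k hk]
  obtain ⟨ε, hε, hε₀⟩ := (hnear.and self_mem_nhdsWithin).exists
  have hε₁ : 0 < 1 + ε := add_pos one_pos hε₀
  refine hv.2 hy hε ⟨ε / (1 + ε), 1 / (1 + ε), div_pos hε₀ hε₁, one_div_pos.2 hε₁,
    by rw [← add_div, add_comm, div_self hε₁.ne'], ?_⟩
  match_scalars
  · field_simp; ring
  · field_simp

lemma extremePoints_subset_exposedPoints :
    {y | ∀ k, f k y ≤ c k}.extremePoints ℝ ⊆ {y | ∀ k, f k y ≤ c k}.exposedPoints ℝ := by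
  intro v hv
  have hface : {y ∈ {y | ∀ k, f k y ≤ c k} | ∀ k : {k // f k v = c k}, f k y = c k} = {v} := by
    refine Set.Subset.antisymm (fun y hy => ?_) (Set.singleton_subset_iff.2 ⟨hv.1, fun k => k.2⟩)
    exact eq_of_mem_extremePoints_of_tight hv hy.1 fun k hk => hy.2 ⟨k, hk⟩
  rw [mem_exposedPoints_iff_exposed_singleton, ← hface]
  exact isExposed_sep_forall_eq (f := fun k : {k // f k v = c k} => f k) fun k y hy => hy k

lemma finite_extremePoints : ({y | ∀ k, f k y ≤ c k}.extremePoints ℝ).Finite := by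
  refine Set.Finite.of_injOn (f := fun v => {k | f k v = c k}) (Set.mapsTo_univ _ _) ?_
    Set.finite_univ
  intro v hv w hw hvw
  exact eq_of_mem_extremePoints_of_tight hw hv.1 fun k hk => (Set.ext_iff.1 hvw k).2 hk

end Polytope

lemma exists_forall_neg_of_convexOn {E ι : Type*} [AddCommGroup E] [Module ℝ E] [Finite ι]
    [Nonempty ι] {F : Set E} {f : ι → E → ℝ} (hf : ∀ k, ConvexOn ℝ F (f k))
    (hle : ∀ k, ∀ y ∈ F, f k y ≤ 0) (hlt : ∀ k, ∃ y ∈ F, f k y < 0) :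
    ∃ y ∈ F, ∀ k, f k y < 0 := by
  cases nonempty_fintype ι
  choose g hgF hg using hlt
  have hpos : (0 : ℝ) < (Fintype.card ι : ℝ)⁻¹ := by positivity
  have hsum : ∑ _k : ι, (Fintype.card ι : ℝ)⁻¹ = 1 := by simp
  refine ⟨∑ k, (Fintype.card ι : ℝ)⁻¹ • g k,
    (hf (Classical.arbitrary ι)).1.sum_mem (fun _ _ => hpos.le) hsum fun k _ => hgF k,
    fun j => ?_⟩
  refine ((hf j).map_sum_le (fun _ _ => hpos.le) hsum fun k _ => hgF k).trans_lt ?_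
  exact Finset.sum_neg' (fun k _ => mul_nonpos_of_nonneg_of_nonpos hpos.le (hle j _ (hgF k)))
    ⟨j, Finset.mem_univ j, mul_neg_of_pos_of_neg hpos (hg j)⟩

section Facet

variable {E : Type*} [NormedAddCommGroup E] [NormedSpace ℝ E] {A F : Set E}

lemma vectorSpan_eq_top_of_interior_nonempty (hA : (interior A).Nonempty) :
    vectorSpan ℝ A = ⊤ :=
  AffineSubspace.vectorSpan_eq_top_of_affineSpan_eq_top ℝ E E
    (affineSpan_eq_top_of_nonempty_interior (hA.mono (interior_mono (subset_convexHull ℝ A))))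

lemma eq_of_isExposed_of_mem_interior (hF : IsExposed ℝ A F) {p : E} (hp : p ∈ F)
    (hpA : p ∈ interior A) : F = A := by
  obtain ⟨l, rfl⟩ := hF ⟨p, hp⟩
  have hmax : IsLocalMax l p := mem_of_superset (mem_interior_iff_mem_nhds.1 hpA) hp.2
  have hl : l = 0 := hmax.hasFDerivAt_eq_zero l.hasFDerivAt
  simp [hl]

variable [FiniteDimensional ℝ E]

lemma vectorSpan_eq_ker (hF : finrank ℝ (vectorSpan ℝ F) + 1 = finrank ℝ E) {f : StrongDual ℝ E}
    (hf : f ≠ 0) {c : ℝ} (hfF : ∀ x ∈ F, f x = c) :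
    vectorSpan ℝ F = LinearMap.ker (f : E →ₗ[ℝ] ℝ) := by
  refine Submodule.eq_of_le_of_finrank_eq ?_ ?_
  · rw [vectorSpan_def, Submodule.span_le]
    rintro _ ⟨x, hx, y, hy, rfl⟩
    simp [hfF x hx, hfF y hy]
  · have hker := Module.Dual.finrank_ker_add_one_of_ne_zero (f := (f : E →ₗ[ℝ] ℝ))
      (fun h => hf (ContinuousLinearMap.coe_injective h))
    omega

lemma eq_sep_of_isExposed (hF : IsExposed ℝ A F) (hne : F.Nonempty) (hA : (interior A).Nonempty)
    (hdim : finrank ℝ (vectorSpan ℝ F) + 1 = finrank ℝ E) {f : StrongDual ℝ E} (hf : f ≠ 0) {c : ℝ}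
    (hfF : ∀ x ∈ F, f x = c) : F = {x ∈ A | f x = c} := by
  refine Set.Subset.antisymm (fun x hx => ⟨hF.subset hx, hfF x hx⟩) ?_
  rintro y ⟨hy, hyc⟩
  obtain ⟨p, hp⟩ := hne
  obtain ⟨l, hl⟩ := hF ⟨p, hp⟩
  have hl₀ : l ≠ 0 := fun h => by
    have hFA : F = A := by simp [hl, h]
    rw [hFA, vectorSpan_eq_top_of_interior_nonempty hA, finrank_top] at hdim
    omega
  have hlF : ∀ x ∈ F, l x = l p := fun x hx => by
    rw [hl] at hx hp
    exact le_antisymm (hp.2 x hx.1) (hx.2 p hp.1)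
  have hmem : y - p ∈ LinearMap.ker (l : E →ₗ[ℝ] ℝ) := by
    rw [← vectorSpan_eq_ker hdim hl₀ hlF, vectorSpan_eq_ker hdim hf hfF]
    simp [hyc, hfF p hp]
  have hly : l y = l p := by simpa [sub_eq_zero] using hmem
  rw [hl] at hp ⊢
  exact ⟨hy, fun x hx => hly ▸ hp.2 x hx⟩

end Facet

/-! ### Walls through an ideal point -/

lemma card_le_two_mul_finrank {E ι : Type*} [NormedAddCommGroup E] [InnerProductSpace ℝ E]
    [FiniteDimensional ℝ E] [Finite ι] {f : ι → E} (hf : ∀ k, ‖f k‖ = 1)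
    (hinner : ∀ k l, k ≠ l → inner ℝ (f k) (f l) = 0 ∨ inner ℝ (f k) (f l) ≤ -1) :
    Nat.card ι ≤ 2 * finrank ℝ E := by
  cases nonempty_fintype ι
  obtain ⟨M, hM, hmax⟩ := exists_maximal_of_wellFoundedGT
    (fun M : Set ι => M.Pairwise fun k l => inner ℝ (f k) (f l) = 0) ⟨∅, Set.pairwise_empty _⟩
  have horth : Orthonormal ℝ fun k : M => f k :=
    ⟨fun k => hf k, fun k l hkl => hM k.2 l.2 fun h => hkl (Subtype.ext h)⟩
  have hMcard : M.ncard ≤ finrank ℝ E := by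
    classical
    rw [← Nat.card_coe_set_eq, Nat.card_eq_fintype_card]
    exact horth.linearIndependent.fintype_card_le_finrank
  have hopp : ∀ l ∈ Mᶜ, ∃ k ∈ M, f l = -f k := fun l hl => by
    by_contra! hno
    refine hl (hmax (Set.Pairwise.insert_of_symm hM (fun k hk hlk => ?_)) (Set.subset_insert l M)
      (Set.mem_insert l M))
    refine (hinner l k hlk).resolve_right fun hle => hno k hk ?_
    exact (inner_eq_neg_one_iff_of_norm_eq_one (hf l) (hf k)).1
      (le_antisymm hle (neg_one_le_real_inner_of_norm_eq_one (hf l) (hf k)))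
  choose! g hgM hg using hopp
  have hinj : Set.InjOn g Mᶜ := fun l hl l' hl' hll' => by
    by_contra hne
    have hval : inner ℝ (f l) (f l') = (1 : ℝ) := by
      rw [hg l hl, hg l' hl', hll', real_inner_self_eq_norm_sq, norm_neg, hf, one_pow]
    rcases hinner l l' hne with h | h <;> linarith
  have hcompl := Set.ncard_le_ncard_of_injOn g hgM hinj
  have hadd := Set.ncard_add_ncard_compl M
  omega

lemma mem_orthogonal_span_range {E κ : Type*} [NormedAddCommGroup E] [InnerProductSpace ℝ E]
    {u : κ → E} {x : E} :
    x ∈ (Submodule.span ℝ (Set.range u))ᗮ ↔ ∀ k, inner ℝ (u k) x = 0 := by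
  rw [← Submodule.span_singleton_le_iff_mem, ← Submodule.IsOrtho, Submodule.isOrtho_comm,
    Submodule.isOrtho_span]
  simp

lemma ncard_tight_add_four_le {n : ℕ} {ι : Type*} [Finite ι] {e : ι → Fin (n + 1) → ℝ}
    {z : Fin (n + 1) → ℝ} (hz : z ∈ lightCone n) (hunit : ∀ k, mink (e k) (e k) = 1)
    (hgram : ∀ k l, k ≠ l → mink (e k) (e l) = 0 ∨ mink (e k) (e l) ≤ -1) {i : ι}
    (hi : mink (e i) z = 0) {K : Set ι} (hKz : ∀ k ∈ K, mink (e k) z = 0)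
    (hKi : ∀ k ∈ K, mink (e i) (e k) = 0) : K.ncard + 4 ≤ 2 * n := by
  set q := horoProj z (e i)
  have hq : ‖q‖ = 1 := norm_horoProj hz hi (hunit i)
  have hs₀ : spatial z ≠ 0 := norm_pos_iff.1 (hz.2 ▸ hz.1)
  have hq₀ : q ≠ 0 := norm_ne_zero_iff.1 (hq ▸ one_ne_zero)
  have hqs : inner ℝ q (spatial z) = (0 : ℝ) := inner_horoProj_spatial hz hi
  have hspan : finrank ℝ (Submodule.span ℝ (Set.range ![q, spatial z])) = 2 := by
    have hli : LinearIndependent ℝ ![q, spatial z] :=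
      linearIndependent_of_ne_zero_of_inner_eq_zero (by simp [Fin.forall_fin_two, hq₀, hs₀])
        (by simp [Pairwise, Fin.forall_fin_two, hqs, real_inner_comm])
    simpa using finrank_span_eq_card hli
  set W := (Submodule.span ℝ (Set.range ![q, spatial z]))ᗮ with hW
  have hWdim : 2 + finrank ℝ W = n := by
    rw [← hspan, hW, Submodule.finrank_add_finrank_orthogonal, finrank_euclideanSpace_fin]
  have hKW : ∀ k : K, horoProj z (e k) ∈ W := fun k => by
    refine mem_orthogonal_span_range.2 (Fin.forall_fin_two.2 ⟨?_, ?_⟩)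
    · exact (inner_horoProj hz hi (hKz k k.2)).trans (hKi k k.2)
    · exact (real_inner_comm _ _).trans (inner_horoProj_spatial hz (hKz k k.2))
  have hcard : Nat.card K ≤ 2 * finrank ℝ W := card_le_two_mul_finrank
    (f := fun k : K => (⟨horoProj z (e k), hKW k⟩ : W))
    (fun k => norm_horoProj hz (hKz k k.2) (hunit k)) fun k l hkl => by
      simpa only [Submodule.coe_inner, inner_horoProj hz (hKz k k.2) (hKz l l.2)] using
        hgram k l fun h => hkl (Subtype.ext h)
  rw [Nat.card_coe_set_eq] at hcard
  omega

end Convexity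

/-! ### Hyperplanes of hyperbolic space -/

section Hyperplanes

section Reflection

variable {n : ℕ} {e f u x : Fin (n + 1) → ℝ}

/-- The reflection of Minkowski space in the hyperplane orthogonal to a spacelike vector `u`. -/
def minkReflection (hu : 0 < mink u u) : (Fin (n + 1) → ℝ) ≃ₗ[ℝ] (Fin (n + 1) → ℝ) :=
  Module.reflection (x := u) (f := (2 / mink u u) • minkBilin n u)
    (div_mul_cancel₀ 2 hu.ne')

lemma minkReflection_apply (hu : 0 < mink u u) (x : Fin (n + 1) → ℝ) :
    minkReflection hu x = x - (2 / mink u u * mink u x) • u := rfl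

lemma minkReflection_minkReflection (hu : 0 < mink u u) (x : Fin (n + 1) → ℝ) :
    minkReflection hu (minkReflection hu x) = x :=
  Module.involutive_reflection _ x

lemma mink_minkReflection (hu : 0 < mink u u) (x y : Fin (n + 1) → ℝ) :
    mink (minkReflection hu x) (minkReflection hu y) = mink x y := by
  simp only [minkReflection_apply, mink_sub_left, mink_sub_right, mink_smul_left, mink_smul_right,
    mink_comm x u]
  field_simp
  ring

lemma minkReflection_mem_futureCone (hu : 0 < mink u u) (hx : x ∈ futureCone n) :
    minkReflection hu x ∈ futureCone n := by
  have hneg := (mem_futureCone_iff.1 hx).1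
  refine mem_futureCone_of_mink_neg hx ((mink_minkReflection hu x x).trans_lt hneg) ?_
  rw [minkReflection_apply, mink_sub_right, mink_smul_right, mink_comm x u]
  have hnonneg : 0 ≤ 2 / mink u u * mink u x ^ 2 := by positivity
  linarith

lemma minkReflection_mem_futureCone_iff (hu : 0 < mink u u) :
    minkReflection hu x ∈ futureCone n ↔ x ∈ futureCone n :=
  ⟨fun h => minkReflection_minkReflection hu x ▸ minkReflection_mem_futureCone hu h,
    minkReflection_mem_futureCone hu⟩

lemma minkReflection_sub (hef : mink e e = mink f f) (hu : 0 < mink (e - f) (e - f)) :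
    minkReflection hu e = f := by
  have hval : mink (e - f) (e - f) = 2 * mink (e - f) e := by
    simp only [mink_sub_left, mink_sub_right, mink_comm f e, ← hef]; ring
  rw [minkReflection_apply, div_mul_eq_mul_div, ← hval, div_self hu.ne', one_smul, sub_sub_cancel]

lemma exists_minkReflection (he : mink e e = 1) (hf : mink f f = 1) :
    ∃ u, ∃ hu : 0 < mink u u, minkReflection hu e = f ∨ minkReflection hu e = -f := by
  wlog hef : mink e f ≤ 0 generalizing f
  · obtain ⟨u, hu, h⟩ := this (f := -f) (by simpa using hf) (by
      rw [mink_neg_right]; linarith)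
    exact ⟨u, hu, by simpa [or_comm] using h⟩
  · have hu : 0 < mink (e - f) (e - f) := by
      simp only [mink_sub_left, mink_sub_right, mink_comm f e]
      linarith
    exact ⟨e - f, hu, .inl (minkReflection_sub (he.trans hf.symm) hu)⟩

end Reflection

section SnocZero

variable {n : ℕ}

/-- The inclusion of Minkowski spaces appending a zero coordinate. -/
def snocZero (n : ℕ) : (Fin (n + 1) → ℝ) →ₗ[ℝ] (Fin (n + 2) → ℝ) where
  toFun x := Fin.snoc x 0
  map_add' x y := funext fun i => Fin.lastCases (by simp) (fun j => by simp) i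
  map_smul' c x := funext fun i => Fin.lastCases (by simp) (fun j => by simp) i

lemma snocZero_castSucc (x : Fin (n + 1) → ℝ) (i : Fin (n + 1)) :
    snocZero n x i.castSucc = x i := Fin.snoc_castSucc (α := fun _ => ℝ) 0 x i

lemma snocZero_last (x : Fin (n + 1) → ℝ) : snocZero n x (Fin.last (n + 1)) = 0 :=
  Fin.snoc_last (α := fun _ => ℝ) 0 x

lemma snocZero_zero (x : Fin (n + 1) → ℝ) : snocZero n x 0 = x 0 := snocZero_castSucc x 0

lemma mink_snocZero (x y : Fin (n + 1) → ℝ) : mink (snocZero n x) (snocZero n y) = mink x y := by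
  simp only [mink, Fin.sum_univ_castSucc, Fin.succ_castSucc, Fin.succ_last, snocZero_castSucc,
    snocZero_last, snocZero_zero, mul_zero, add_zero]

lemma snocZero_mem_futureCone {x : Fin (n + 1) → ℝ} :
    snocZero n x ∈ futureCone (n + 1) ↔ x ∈ futureCone n := by
  rw [mem_futureCone_iff, mem_futureCone_iff, mink_snocZero, snocZero_zero]

lemma exists_snocZero_eq_iff {y : Fin (n + 2) → ℝ} :
    (∃ x, snocZero n x = y) ↔ y (Fin.last (n + 1)) = 0 := by
  refine ⟨fun ⟨x, hx⟩ => hx ▸ snocZero_last x, fun hy => ⟨Fin.init y, ?_⟩⟩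
  change Fin.snoc (Fin.init y) 0 = y
  rw [← hy, Fin.snoc_init_self]

lemma mink_single_last (x : Fin (n + 2) → ℝ) :
    mink (Pi.single (Fin.last (n + 1)) 1) x = x (Fin.last (n + 1)) := by
  simp [mink, Pi.single_apply, Fin.last_pos.ne]

end SnocZero

variable {n : ℕ} {e : Fin (n + 2) → ℝ} {φ : (Fin (n + 1) → ℝ) →ₗ[ℝ] (Fin (n + 2) → ℝ)}
  {x : Fin (n + 1) → ℝ}

/-- `φ` identifies `ℍⁿ` isometrically with the hyperplane of `ℍⁿ⁺¹` orthogonal to `e`. -/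
structure IsHyperplaneEmbedding (e : Fin (n + 2) → ℝ)
    (φ : (Fin (n + 1) → ℝ) →ₗ[ℝ] (Fin (n + 2) → ℝ)) : Prop where
  mink_map : ∀ x y, mink (φ x) (φ y) = mink x y
  exists_map_eq_iff : ∀ y, (∃ x, φ x = y) ↔ mink e y = 0
  map_mem_futureCone_iff : ∀ x, φ x ∈ futureCone (n + 1) ↔ x ∈ futureCone n

lemma exists_isHyperplaneEmbedding (he : mink e e = 1) : ∃ φ, IsHyperplaneEmbedding e φ := by
  obtain ⟨u, hu, hue⟩ := exists_minkReflection (f := Pi.single (Fin.last (n + 1)) 1) he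
    (by rw [mink_single_last, Pi.single_eq_same])
  refine ⟨(minkReflection hu).toLinearMap.comp (snocZero n),
    fun x y => ?_, fun y => ?_, fun x => ?_⟩
  · exact (mink_minkReflection hu _ _).trans (mink_snocZero x y)
  · have hrefl : mink e y = 0 ↔ minkReflection hu y (Fin.last (n + 1)) = 0 := by
      rw [← mink_minkReflection hu e y]
      rcases hue with h | h <;> simp [h, mink_single_last]
    rw [hrefl, ← exists_snocZero_eq_iff]
    refine exists_congr fun x => ⟨fun h => ?_, fun h => ?_⟩
    · rw [← h]
      exact (minkReflection_minkReflection hu _).symm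
    · rw [LinearMap.comp_apply, h]
      exact minkReflection_minkReflection hu y
  · exact (minkReflection_mem_futureCone_iff hu).trans snocZero_mem_futureCone

namespace IsHyperplaneEmbedding

lemma mink_normal_map (h : IsHyperplaneEmbedding e φ) (x : Fin (n + 1) → ℝ) : mink e (φ x) = 0 :=
  (h.exists_map_eq_iff _).1 ⟨x, rfl⟩

lemma injective (h : IsHyperplaneEmbedding e φ) : Function.Injective φ := by
  refine (injective_iff_map_eq_zero φ).2 fun x hx => by_contra fun hne => ?_
  have hmink : ∀ y, mink x y = 0 := fun y => by rw [← h.mink_map, hx, mink_zero_left]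
  obtain ⟨w, hw⟩ := futureCone_nonempty n
  exact (mink_self_pos hw hne (hmink w)).ne' (hmink x)

lemma map_mem_lightCone_iff (h : IsHyperplaneEmbedding e φ) (x : Fin (n + 1) → ℝ) :
    φ x ∈ lightCone (n + 1) ↔ x ∈ lightCone n := by
  obtain ⟨w, hw⟩ := futureCone_nonempty n
  rw [mem_lightCone_iff_mink hw, mem_lightCone_iff_mink ((h.map_mem_futureCone_iff w).2 hw),
    h.mink_map, h.mink_map]

lemma injOn_kleinMap_map_kleinLift (h : IsHyperplaneEmbedding e φ) :
    Set.InjOn (fun y => kleinMap (φ (kleinLift y))) {y | φ (kleinLift y) 0 ≠ 0} := by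
  intro x hx y hy hxy
  have hlift := congrArg kleinLift hxy
  simp only [kleinLift_kleinMap hx, kleinLift_kleinMap hy, ← map_smul] at hlift
  have hklein := congrArg kleinMap (h.injective hlift)
  rwa [kleinMap_smul (inv_ne_zero hx), kleinMap_smul (inv_ne_zero hy), kleinMap_kleinLift,
    kleinMap_kleinLift] at hklein

end IsHyperplaneEmbedding

end Hyperplanes

/-! ### The Klein model of a polyhedron -/

section Region

variable {n : ℕ} {ι : Type*} {e : ι → Fin (n + 1) → ℝ} {u x : Fin (n + 1) → ℝ}
  {y : EuclideanSpace ℝ (Fin n)}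

/-- The polyhedron with outer normals `e` in the Klein model, extended across the unit sphere. -/
def kleinPolyhedron (e : ι → Fin (n + 1) → ℝ) : Set (EuclideanSpace ℝ (Fin n)) :=
  {y | kleinLift y ∈ polyCone e}

/-- The set of ideal points of the polyhedron with outer normals `e`. -/
def idealPts (e : ι → Fin (n + 1) → ℝ) : Set (EuclideanSpace ℝ (Fin n)) :=
  sphere 0 1 ∩ kleinPolyhedron e

lemma mink_kleinLift_nonpos_iff :
    mink u (kleinLift y) ≤ 0 ↔ innerSL ℝ (spatial u) y ≤ u 0 := by
  rw [mink_kleinLift, innerSL_apply_apply, sub_nonpos]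

lemma mink_kleinLift_eq_zero_iff :
    mink u (kleinLift y) = 0 ↔ innerSL ℝ (spatial u) y = u 0 := by
  rw [mink_kleinLift, innerSL_apply_apply, sub_eq_zero]

lemma continuous_mink_kleinLift (u : Fin (n + 1) → ℝ) :
    Continuous fun y : EuclideanSpace ℝ (Fin n) => mink u (kleinLift y) := by
  simp only [mink_kleinLift]
  fun_prop

lemma kleinPolyhedron_eq :
    kleinPolyhedron e = {y | ∀ k, innerSL ℝ (spatial (e k)) y ≤ e k 0} :=
  Set.ext fun _ => forall_congr' fun _ => mink_kleinLift_nonpos_iff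

lemma convex_kleinPolyhedron : Convex ℝ (kleinPolyhedron e) := by
  rw [kleinPolyhedron_eq, Set.ofPred_forall]
  exact convex_iInter fun k => convex_halfSpace_le (innerSL ℝ (spatial (e k))).isLinear (e k 0)

lemma isClosed_kleinPolyhedron : IsClosed (kleinPolyhedron e) := by
  rw [kleinPolyhedron_eq, Set.ofPred_forall]
  exact isClosed_iInter fun k => isClosed_Iic.preimage (innerSL ℝ (spatial (e k))).continuous

lemma isOpen_setOf_forall_mink_kleinLift_neg [Finite ι] :
    IsOpen {y | ∀ k, mink (e k) (kleinLift y) < 0} := by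
  rw [Set.ofPred_forall]
  exact isOpen_iInter_of_finite fun k => isOpen_Iio.preimage (continuous_mink_kleinLift (e k))

lemma mem_interior_kleinPolyhedron [Finite ι] (hy : ∀ k, mink (e k) (kleinLift y) < 0) :
    y ∈ interior (kleinPolyhedron e) :=
  interior_maximal (fun _ hx k => (hx k).le) isOpen_setOf_forall_mink_kleinLift_neg hy

lemma mink_neg_of_mem_interior_kleinPolyhedron (hunit : ∀ k, mink (e k) (e k) = 1)
    (hy : y ∈ interior (kleinPolyhedron e)) (k : ι) : mink (e k) (kleinLift y) < 0 := by
  obtain ⟨t, ht, ht₀⟩ := ((eventually_add_smul_mem isOpen_interior hy (spatial (e k))).and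
    self_mem_nhdsWithin).exists
  have hle := interior_subset ht k
  rw [mink_kleinLift, inner_add_right, inner_smul_right, real_inner_self_eq_norm_sq] at hle
  have hpos : 0 < t * ‖spatial (e k)‖ ^ 2 :=
    mul_pos ht₀ (pow_pos (norm_pos_iff.2 (spatial_ne_zero (hunit k))) 2)
  rw [mink_kleinLift]
  linarith

lemma mink_kleinLift_kleinMap_eq_zero_iff (hx : 0 < x 0) :
    mink u (kleinLift (kleinMap x)) = 0 ↔ mink u x = 0 := by
  rw [mink_kleinLift_kleinMap hx.ne', mul_eq_zero_iff_left (inv_pos.2 hx).ne']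

lemma kleinMap_mem_kleinPolyhedron_iff (hx : 0 < x 0) :
    kleinMap x ∈ kleinPolyhedron e ↔ x ∈ polyCone e := forall_congr' fun k => by
  rw [mink_kleinLift_kleinMap hx.ne', mul_nonpos_iff_pos_imp_nonpos]
  simp [hx, hx.le]

lemma mem_idealPts_iff : y ∈ idealPts e ↔ kleinLift y ∈ lightCone n ∩ polyCone e := by
  rw [idealPts, Set.mem_inter_iff, mem_sphere_zero_iff_norm, ← kleinLift_mem_lightCone]
  rfl

lemma kleinMap_mem_idealPts (hx : x ∈ lightCone n) (hxe : x ∈ polyCone e) :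
    kleinMap x ∈ idealPts e :=
  ⟨by rw [mem_sphere_zero_iff_norm, norm_kleinMap hx.1, hx.2, div_self hx.1.ne'],
    (kleinMap_mem_kleinPolyhedron_iff hx.1).2 hxe⟩

lemma kleinMap_mem_ball (hx : x ∈ futureCone n) : kleinMap x ∈ ball 0 1 := by
  have hx₀ := pos_of_mem_futureCone hx
  rw [mem_ball_zero_iff, norm_kleinMap hx₀, div_lt_one hx₀]
  exact hx

lemma hyperboloid_subset_futureCone : Hyperboloid n ⊆ futureCone n := fun _ hx =>
  mem_futureCone_iff.2 ⟨hx.1.trans_lt neg_one_lt_zero, hx.2⟩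

lemma exists_smul_mem_hyperboloid (hx : x ∈ futureCone n) :
    ∃ c > (0 : ℝ), c • x ∈ Hyperboloid n := by
  obtain ⟨hneg, hx₀⟩ := mem_futureCone_iff.1 hx
  have hsqrt : 0 < √(-mink x x) := Real.sqrt_pos.2 (neg_pos.2 hneg)
  have hsq : √(-mink x x) * √(-mink x x) = -mink x x :=
    Real.mul_self_sqrt (neg_pos.2 hneg).le
  refine ⟨(√(-mink x x))⁻¹, inv_pos.2 hsqrt, ?_, mul_pos (inv_pos.2 hsqrt) hx₀⟩
  rw [mink_smul_left, mink_smul_right, ← mul_assoc, ← mul_inv, hsq, inv_neg, neg_mul,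
    inv_mul_cancel₀ hneg.ne]

lemma image_kleinMap (e : ι → Fin (n + 1) → ℝ) :
    kleinMap '' {x ∈ Hyperboloid n | ∀ i, mink (e i) x ≤ 0} = ball 0 1 ∩ kleinPolyhedron e := by
  refine Set.Subset.antisymm ?_ fun y hy => ?_
  · rintro _ ⟨x, ⟨hx, hxe⟩, rfl⟩
    exact ⟨kleinMap_mem_ball (hyperboloid_subset_futureCone hx),
      (kleinMap_mem_kleinPolyhedron_iff hx.2).2 hxe⟩
  · obtain ⟨c, hc, hmem⟩ := exists_smul_mem_hyperboloid
      (kleinLift_mem_futureCone.2 (mem_ball_zero_iff.1 hy.1))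
    exact ⟨c • kleinLift y, ⟨hmem, smul_mem_polyCone hy.2 hc.le⟩, by
      rw [kleinMap_smul hc.ne', kleinMap_kleinLift]⟩

lemma sphere_inter_infinite (hn : 2 ≤ n) (hy : y ∈ sphere 0 1)
    {U : Set (EuclideanSpace ℝ (Fin n))} (hU : U ∈ 𝓝 y) : (U ∩ sphere 0 1).Infinite := by
  have hpre : IsPreconnected (sphere (0 : EuclideanSpace ℝ (Fin n)) 1) :=
    isPreconnected_sphere (by
      rw [← finrank_eq_rank, finrank_euclideanSpace_fin]; exact_mod_cast hn) _ _
  have hnt : (sphere (0 : EuclideanSpace ℝ (Fin n)) 1).Nontrivial :=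
    ⟨y, hy, -y, by simpa using hy, fun h => ne_neg_of_mem_unit_sphere ℝ ⟨y, hy⟩ (Subtype.ext h)⟩
  exact Set.Infinite.of_accPt ((hpre.preperfect_of_nontrivial hnt y hy).nhds_inter hU)

lemma idealPts_infinite [Finite ι] (hn : 2 ≤ n) (hy : y ∈ sphere 0 1)
    (hye : ∀ k, mink (e k) (kleinLift y) < 0) : (idealPts e).Infinite := by
  rw [idealPts, Set.inter_comm]
  exact sphere_inter_infinite hn hy (mem_interior_iff_mem_nhds.1 (mem_interior_kleinPolyhedron hye))

lemma exists_norm_spatial_eq {p : Fin (n + 1) → ℝ} (hp : p ∈ futureCone n)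
    (hx : x ∉ causalCone n) :
    ∃ t ∈ Set.Ico (0 : ℝ) 1, ‖spatial ((1 - t) • p + t • x)‖ = ((1 - t) • p + t • x) 0 := by
  have hcont : Continuous fun t : ℝ => (1 - t) • p + t • x := by fun_prop
  obtain ⟨t, ht, hzero⟩ := intermediate_value_Ico (zero_le_one' ℝ)
    (f := fun t => ‖spatial ((1 - t) • p + t • x)‖ - ((1 - t) • p + t • x) 0)
    (((continuous_spatial.comp hcont).norm.sub
      ((continuous_apply 0).comp hcont)).continuousOn)
    (show (0 : ℝ) ∈ _ by
      simpa using ⟨le_of_lt (show ‖spatial p‖ < p 0 from hp), not_le.1 hx⟩)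
  exact ⟨t, ht, sub_eq_zero.1 hzero⟩

/-- A segment from an interior point to a point of the cone outside the causal cone meets the light
cone in an interior point of the polyhedron, near which there are infinitely many ideal points. -/
lemma polyCone_subset_causalCone [Finite ι] (hn : 2 ≤ n) (hfin : (idealPts e).Finite)
    {p : Fin (n + 1) → ℝ} (hp : p ∈ futureCone n) (hpe : ∀ k, mink (e k) p < 0) :
    polyCone e ⊆ causalCone n := by
  intro x hx
  by_contra hxc
  obtain ⟨t, ht, hnorm⟩ := exists_norm_spatial_eq hp hxc
  set z := (1 - t) • p + t • x with hz
  have hze : ∀ k, mink (e k) z < 0 := fun k => by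
    rw [hz, mink_add_right, mink_smul_right, mink_smul_right]
    exact add_neg_of_neg_of_nonpos (mul_neg_of_pos_of_neg (sub_pos.2 ht.2) (hpe k))
      (mul_nonpos_of_nonneg_of_nonpos ht.1 (hx k))
  rcases (hnorm ▸ norm_nonneg _ : 0 ≤ z 0).eq_or_lt with hz₀ | hz₀
  · have hzero : z = 0 := spatial_ext hz₀.symm (by
      rw [map_zero, ← norm_eq_zero, hnorm, ← hz₀])
    have : IsEmpty ι := ⟨fun k => by simpa [hzero, mink] using hze k⟩
    have : NeZero n := ⟨by omega⟩
    exact idealPts_infinite (y := EuclideanSpace.single 0 1) hn (by simp) (fun k => isEmptyElim k)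
      hfin
  · refine idealPts_infinite hn (y := kleinMap z) ?_ (fun k => ?_) hfin
    · rw [mem_sphere_zero_iff_norm, norm_kleinMap hz₀, hnorm, div_self hz₀.ne']
    · rw [mink_kleinLift_kleinMap hz₀.ne']
      exact mul_neg_of_pos_of_neg (inv_pos.2 hz₀) (hze k)

end Region

section Polyhedra

variable {n : ℕ} {x : Fin (n + 1) → ℝ} {y : EuclideanSpace ℝ (Fin n)}
  {F : Set (EuclideanSpace ℝ (Fin n))}

lemma exists_interior (P : HypPolyhedron n) :
    ∃ p ∈ ball 0 1, ∀ k, mink (P.e k) (kleinLift p) < 0 := by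
  obtain ⟨p, hp⟩ := P.nonempty_int
  rw [image_kleinMap, interior_inter, isOpen_ball.interior_eq] at hp
  exact ⟨p, hp.1, mink_neg_of_mem_interior_kleinPolyhedron P.unit hp.2⟩

lemma cl_eq (P : HypPolyhedron n) : P.cl = closedBall 0 1 ∩ kleinPolyhedron P.e := by
  have himage : kleinMap '' P.carrier = ball 0 1 ∩ kleinPolyhedron P.e := image_kleinMap P.e
  have hinterior : interior (closedBall 0 1 ∩ kleinPolyhedron P.e) =
      ball 0 1 ∩ interior (kleinPolyhedron P.e) := by
    rw [interior_inter, interior_closedBall _ one_ne_zero]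
  have hclosed : IsClosed (closedBall 0 1 ∩ kleinPolyhedron P.e) :=
    isClosed_closedBall.inter isClosed_kleinPolyhedron
  have hconvex : Convex ℝ (closedBall 0 1 ∩ kleinPolyhedron P.e) :=
    (convex_closedBall _ _).inter convex_kleinPolyhedron
  obtain ⟨p, hp, hpe⟩ := exists_interior P
  rw [HypPolyhedron.cl, himage]
  refine Set.Subset.antisymm (closure_minimal (Set.inter_subset_inter_left _ ball_subset_closedBall)
    hclosed) ?_
  calc closedBall 0 1 ∩ kleinPolyhedron P.e
      = closure (interior (closedBall 0 1 ∩ kleinPolyhedron P.e)) := by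
        rw [hconvex.closure_interior_eq_closure_of_nonempty_interior
          (hinterior ▸ ⟨p, hp, mem_interior_kleinPolyhedron hpe⟩), hclosed.closure_eq]
    _ ⊆ closure (ball 0 1 ∩ kleinPolyhedron P.e) := by
        rw [hinterior]
        exact closure_mono (Set.inter_subset_inter_right _ interior_subset)

lemma convex_cl (P : HypPolyhedron n) : Convex ℝ P.cl :=
  cl_eq P ▸ (convex_closedBall _ _).inter convex_kleinPolyhedron

lemma isCompact_cl (P : HypPolyhedron n) : IsCompact P.cl :=
  cl_eq P ▸ (isCompact_closedBall _ _).inter_right isClosed_kleinPolyhedron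

lemma mem_interior_cl {P : HypPolyhedron n} (hy : y ∈ ball 0 1)
    (hyk : ∀ k, mink (P.e k) (kleinLift y) < 0) : y ∈ interior P.cl := by
  rw [cl_eq, interior_inter, interior_closedBall _ one_ne_zero]
  exact ⟨hy, mem_interior_kleinPolyhedron hyk⟩

lemma kleinMap_mem_cl {P : HypPolyhedron n} (hx : x ∈ futureCone n) (hxe : x ∈ polyCone P.e) :
    kleinMap x ∈ P.cl := by
  rw [cl_eq]
  exact ⟨ball_subset_closedBall (kleinMap_mem_ball hx),
    (kleinMap_mem_kleinPolyhedron_iff (pos_of_mem_futureCone hx)).2 hxe⟩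

lemma mink_kleinLift_nonpos_of_mem_cl {P : HypPolyhedron n} (hy : y ∈ P.cl) (k : Fin P.m) :
    mink (P.e k) (kleinLift y) ≤ 0 := by
  rw [cl_eq] at hy
  exact hy.2 k

lemma norm_le_one_of_mem_cl {P : HypPolyhedron n} (hy : y ∈ P.cl) : ‖y‖ ≤ 1 := by
  rw [cl_eq] at hy
  exact mem_closedBall_zero_iff.1 hy.1

lemma verts_eq_exposedPoints (P : HypPolyhedron n) : P.verts = P.cl.exposedPoints ℝ :=
  Set.ext fun _ => mem_exposedPoints_iff_exposed_singleton.symm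

lemma idealVerts_eq (P : HypPolyhedron n) : P.idealVerts = idealPts P.e := by
  refine Set.Subset.antisymm (fun y hy => ?_) fun y hy => ?_
  · have hcl : y ∈ P.cl := hy.1.subset rfl
    rw [cl_eq] at hcl
    exact ⟨mem_sphere_zero_iff_norm.2 hy.2, hcl.2⟩
  · have hy₁ : ‖y‖ = 1 := mem_sphere_zero_iff_norm.1 hy.1
    have hcl : y ∈ P.cl := by
      rw [cl_eq]
      exact ⟨sphere_subset_closedBall hy.1, hy.2⟩
    have hsupp : ∀ _ : Unit, ∀ x ∈ P.cl, innerSL ℝ y x ≤ 1 := fun _ x hx =>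
      (real_inner_le_norm y x).trans (by rw [hy₁, one_mul]; exact norm_le_one_of_mem_cl hx)
    have hsingleton : {x ∈ P.cl | ∀ _ : Unit, innerSL ℝ y x = 1} = {y} := by
      refine Set.Subset.antisymm (fun x hx => ?_)
        (Set.singleton_subset_iff.2 ⟨hcl, fun _ => by simp [hy₁]⟩)
      have hsq : ‖x - y‖ ^ 2 ≤ 0 := by
        rw [norm_sub_sq_real, real_inner_comm, show inner ℝ y x = 1 from hx.2 (), hy₁]
        nlinarith [norm_le_one_of_mem_cl hx.1, norm_nonneg x]
      exact sub_eq_zero.1 (norm_eq_zero.1 (pow_eq_zero_iff two_ne_zero |>.1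
        (hsq.antisymm (sq_nonneg _))))
    exact ⟨by
      rw [HypPolyhedron.verts, Set.mem_ofPred_eq, ← hsingleton]
      exact isExposed_sep_forall_eq hsupp, hy₁⟩

lemma finiteVolume_of_polyCone_subset {P : HypPolyhedron n}
    (hP : polyCone P.e ⊆ causalCone n) : P.FiniteVolume := by
  have hcl : P.cl = {y | ∀ k, innerSL ℝ (spatial (P.e k)) y ≤ P.e k 0} := by
    rw [cl_eq, ← kleinPolyhedron_eq, Set.inter_eq_right]
    intro y hy
    have hle : ‖spatial (kleinLift y)‖ ≤ kleinLift y 0 := hP hy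
    rwa [spatial_kleinLift, kleinLift_zero, ← mem_closedBall_zero_iff] at hle
  have hverts : P.verts = P.cl.extremePoints ℝ := by
    rw [verts_eq_exposedPoints, hcl]
    exact Set.Subset.antisymm exposedPoints_subset_extremePoints extremePoints_subset_exposedPoints
  have hfin : P.verts.Finite := by
    rw [hverts, hcl]
    exact finite_extremePoints
  refine ⟨hfin, ?_⟩
  rw [← (hfin.isClosed_convexHull ℝ).closure_eq, hverts,
    closure_convexHull_extremePoints (isCompact_cl P) (convex_cl P)]

/-! ### Faces of polyhedra -/

lemma exists_mem_ball_of_sdim_pos (hF : Convex ℝ F) (hF₁ : F ⊆ closedBall 0 1)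
    (hdim : 0 < sdim F) : ∃ y ∈ F, y ∈ ball 0 1 := by
  have hnt : F.Nontrivial := by
    by_contra h
    rw [sdim, vectorSpan_of_subsingleton ℝ (Set.not_nontrivial_iff.1 h), finrank_bot] at hdim
    exact hdim.false
  obtain ⟨x, hx, y, hy, hxy⟩ := hnt
  refine ⟨(2⁻¹ : ℝ) • x + (2⁻¹ : ℝ) • y, hF hx hy ?_ ?_ ?_, mem_ball_zero_iff.2
    (norm_combo_lt_of_ne (mem_closedBall_zero_iff.1 (hF₁ hx)) (mem_closedBall_zero_iff.1 (hF₁ hy))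
      hxy ?_ ?_ ?_)⟩ <;> norm_num

lemma isRightAngled_of_gram (hn : 3 ≤ n) {P : HypPolyhedron n}
    (hgram : ∀ i j, i ≠ j → mink (P.e i) (P.e j) = 0 ∨ mink (P.e i) (P.e j) ≤ -1) :
    P.IsRightAngled := by
  rintro i j hij ⟨F, ⟨hexp, -, hdim⟩, hFi, hFj⟩
  refine (hgram i j hij).resolve_right fun hle => ?_
  obtain ⟨y, hyF, hy⟩ := exists_mem_ball_of_sdim_pos (hexp.convex (convex_cl P))
    (fun y hy => mem_closedBall_zero_iff.2 (norm_le_one_of_mem_cl (hexp.subset hy))) (by omega)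
  obtain ⟨x, hx, rfl⟩ : y ∈ kleinMap '' P.carrier := by
    rw [HypPolyhedron.carrier, image_kleinMap]
    exact ⟨hy, mink_kleinLift_nonpos_of_mem_cl (hexp.subset hyF)⟩
  obtain ⟨p, -, hp⟩ := exists_interior P
  have hne : P.e i + P.e j ≠ 0 := fun h => by
    have hsum : mink (P.e i + P.e j) (kleinLift p) = 0 := by rw [h, mink_zero_left]
    rw [mink_add_left] at hsum
    linarith [hp i, hp j]
  have hpos := mink_self_pos (hyperboloid_subset_futureCone hx.1) hne
    (by rw [mink_add_left, hFi x hx hyF, hFj x hx hyF, add_zero])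
  simp only [mink_add_left, mink_add_right, P.unit, mink_comm (P.e j) (P.e i)] at hpos
  linarith

lemma exists_mink_kleinLift_eq_zero {P : HypPolyhedron n} (hF : IsExposed ℝ P.cl F) (hne : F ≠ P.cl)
    (hdim : 0 < sdim F) : ∃ k, ∀ y ∈ F, mink (P.e k) (kleinLift y) = 0 := by
  by_contra! hno
  have hconv := hF.convex (convex_cl P)
  have hF₁ : F ⊆ closedBall 0 1 := fun y hy =>
    mem_closedBall_zero_iff.2 (norm_le_one_of_mem_cl (hF.subset hy))
  let f : Option (Fin P.m) → EuclideanSpace ℝ (Fin n) → ℝ := fun k y =>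
    k.elim (‖y‖ - 1) fun k => mink (P.e k) (kleinLift y)
  have hconvex : ∀ k, ConvexOn ℝ F (f k) := by
    rintro (_ | k)
    · exact (convexOn_norm hconv).add_const (-1)
    · simp only [f, Option.elim_some, mink_kleinLift, sub_eq_add_neg]
      exact ((innerSL ℝ (spatial (P.e k))).toLinearMap.convexOn hconv).add_const _
  have hle : ∀ k, ∀ y ∈ F, f k y ≤ 0 := by
    rintro (_ | k) y hy
    exacts [sub_nonpos.2 (mem_closedBall_zero_iff.1 (hF₁ hy)),
      mink_kleinLift_nonpos_of_mem_cl (hF.subset hy) k]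
  have hlt : ∀ k, ∃ y ∈ F, f k y < 0 := by
    rintro (_ | k)
    · obtain ⟨y, hyF, hy⟩ := exists_mem_ball_of_sdim_pos hconv hF₁ hdim
      exact ⟨y, hyF, sub_neg.2 (mem_ball_zero_iff.1 hy)⟩
    · obtain ⟨y, hyF, hy⟩ := hno k
      exact ⟨y, hyF, (mink_kleinLift_nonpos_of_mem_cl (hF.subset hyF) k).lt_of_ne hy⟩
  obtain ⟨y, hyF, hy⟩ := exists_forall_neg_of_convexOn hconvex hle hlt
  exact hne (eq_of_isExposed_of_mem_interior hF hyF
    (mem_interior_cl (mem_ball_zero_iff.2 (sub_neg.1 (hy none))) fun k => hy (some k)))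

lemma exists_wall_of_facet (hn : 2 ≤ n) {P : HypPolyhedron n} (hF : F ∈ P.faces (n - 1)) :
    ∃ k, F = {y ∈ P.cl | mink (P.e k) (kleinLift y) = 0} := by
  obtain ⟨hexp, hne, hdim⟩ := hF
  obtain ⟨p, hp, hpe⟩ := exists_interior P
  have hint : (interior P.cl).Nonempty := ⟨p, mem_interior_cl hp hpe⟩
  have hproper : F ≠ P.cl := fun h => by
    rw [h, sdim, vectorSpan_eq_top_of_interior_nonempty hint, finrank_top,
      finrank_euclideanSpace_fin] at hdim
    omega
  obtain ⟨k, hk⟩ := exists_mink_kleinLift_eq_zero hexp hproper (by omega)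
  simp only [mink_kleinLift_eq_zero_iff] at hk ⊢
  refine ⟨k, eq_sep_of_isExposed hexp hne hint ?_ ?_ hk⟩
  · rw [finrank_euclideanSpace_fin, show finrank ℝ (vectorSpan ℝ F) = n - 1 from hdim]
    omega
  · rw [← norm_ne_zero_iff, innerSL_apply_norm, norm_ne_zero_iff]
    exact spatial_ne_zero (P.unit k)

end Polyhedra

section RelInterior

variable {n : ℕ} {κ : Type*} {P : HypPolyhedron n} {u : κ → Fin (n + 1) → ℝ}
  {w x : Fin (n + 1) → ℝ}

lemma linearIndependent_spatial (hu : LinearIndependent ℝ u) (hw : w ∈ futureCone n)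
    (huw : ∀ k, mink (u k) w = 0) : LinearIndependent ℝ fun k => spatial (u k) := by
  have hle : Submodule.span ℝ (Set.range u) ≤ LinearMap.ker (minkBilin n w) := by
    rw [Submodule.span_le]
    rintro _ ⟨k, rfl⟩
    exact (mink_comm w (u k)).trans (huw k)
  refine hu.map (f := spatial) (Submodule.disjoint_def.2 fun x hx hxs => spatial_ext ?_ ?_)
  · have hwx : mink w x = 0 := hle hx
    rw [mink_eq_inner, LinearMap.mem_ker.1 hxs, inner_zero_right, add_zero, neg_eq_zero] at hwx
    exact (mul_eq_zero.1 hwx).resolve_left (pos_of_mem_futureCone hw).ne'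
  · rw [LinearMap.mem_ker.1 hxs, map_zero]

lemma IsRelInteriorPoint.kleinMap_mem (h : IsRelInteriorPoint P.e u w) :
    kleinMap w ∈ {y ∈ P.cl | ∀ k, mink (u k) (kleinLift y) = 0} := by
  have hmem := (h.eventually_mem 0 fun k => (minkBilin n (u k)).map_zero).exists
  simp only [smul_zero, add_zero, exists_const] at hmem
  exact ⟨kleinMap_mem_cl hmem.1 hmem.2, fun k =>
    (mink_kleinLift_kleinMap_eq_zero_iff (pos_of_mem_futureCone hmem.1)).2 (h.mink_eq_zero k)⟩

lemma IsRelInteriorPoint.vectorSpan_eq_orthogonal (h : IsRelInteriorPoint P.e u w) :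
    vectorSpan ℝ {y ∈ P.cl | ∀ k, mink (u k) (kleinLift y) = 0} =
      (Submodule.span ℝ (Set.range fun k => spatial (u k)))ᗮ := by
  refine le_antisymm ?_ fun x hx => ?_
  · rw [vectorSpan_def, Submodule.span_le]
    rintro _ ⟨x, hx, y, hy, rfl⟩
    refine mem_orthogonal_span_range.2 fun k => ?_
    have hxk := hx.2 k
    have hyk := hy.2 k
    rw [mink_kleinLift] at hxk hyk
    change inner ℝ (spatial (u k)) (x - y) = 0
    rw [inner_sub_right]
    linarith
  · have hxu : ∀ k, mink (u k) (kleinLift x - kleinLift 0) = 0 := fun k => by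
      rw [mink_sub_right, mink_kleinLift, mink_kleinLift, mem_orthogonal_span_range.1 hx k,
        inner_zero_right, sub_self]
    obtain ⟨ε, ⟨hfuture, hcone⟩, hε⟩ :=
      ((h.eventually_mem _ hxu).and self_mem_nhdsWithin).exists
    have hmem : kleinMap (w + ε • (kleinLift x - kleinLift 0)) ∈
        {y ∈ P.cl | ∀ k, mink (u k) (kleinLift y) = 0} :=
      ⟨kleinMap_mem_cl hfuture hcone, fun k =>
        (mink_kleinLift_kleinMap_eq_zero_iff (pos_of_mem_futureCone hfuture)).2 (by
          rw [mink_add_right, mink_smul_right, h.mink_eq_zero, hxu, mul_zero, add_zero])⟩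
    have hdiff : kleinMap (w + ε • (kleinLift x - kleinLift 0)) - kleinMap w =
        ((w 0)⁻¹ * ε) • x := by
      simp [kleinMap_eq, mul_smul]
    have hspan := vsub_mem_vectorSpan ℝ hmem h.kleinMap_mem
    rw [vsub_eq_sub, hdiff] at hspan
    exact (Submodule.smul_mem_iff _
      (mul_pos (inv_pos.2 (pos_of_mem_futureCone h.mem_futureCone)) hε).ne').1 hspan

lemma IsRelInteriorPoint.mem_faces [Finite κ] (h : IsRelInteriorPoint P.e u w)
    (hu : LinearIndependent ℝ u) (hle : ∀ k, ∀ y ∈ P.cl, mink (u k) (kleinLift y) ≤ 0) :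
    {y ∈ P.cl | ∀ k, mink (u k) (kleinLift y) = 0} ∈ P.faces (n - Nat.card κ) := by
  cases nonempty_fintype κ
  refine ⟨?_, ⟨_, h.kleinMap_mem⟩, ?_⟩
  · simp only [mink_kleinLift_eq_zero_iff]
    exact isExposed_sep_forall_eq fun k y hy => mink_kleinLift_nonpos_iff.1 (hle k y hy)
  · have hsum := Submodule.finrank_add_finrank_orthogonal
      (Submodule.span ℝ (Set.range fun k => spatial (u k)))
    rw [finrank_span_eq_card (linearIndependent_spatial hu h.mem_futureCone h.mink_eq_zero),
      finrank_euclideanSpace_fin, ← Nat.card_eq_fintype_card] at hsum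
    rw [sdim, h.vectorSpan_eq_orthogonal]
    omega

end RelInterior

section FacetCount

variable {n : ℕ} {P : HypPolyhedron n} {S : Set (Fin P.m)}

lemma linearIndependent_pair_of_mink {e f w w' : Fin (n + 1) → ℝ} (hew : mink e w = 0)
    (hfw : mink f w ≠ 0) (hew' : mink e w' ≠ 0) (hfw' : mink f w' = 0) :
    LinearIndependent ℝ ![e, f] := by
  refine LinearIndependent.pair_iff.2 fun s t hst => ?_
  have hw : mink (s • e + t • f) w = 0 := by rw [hst, mink_zero_left]
  have hw' : mink (s • e + t • f) w' = 0 := by rw [hst, mink_zero_left]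
  simp only [mink_add_left, mink_smul_left, hew, hfw', mul_zero, zero_add, add_zero] at hw hw'
  exact ⟨(mul_eq_zero.1 hw').resolve_right hew', (mul_eq_zero.1 hw).resolve_right hfw⟩

lemma mink_eq_zero_of_isRelInteriorPoint (hP : P.IsRightAngled) {i j : Fin P.m} (hij : i ≠ j)
    (hlin : LinearIndependent ℝ ![P.e i, P.e j]) {w : Fin (n + 1) → ℝ}
    (hw : IsRelInteriorPoint P.e ![P.e i, P.e j] w) : mink (P.e i) (P.e j) = 0 := by
  have hface := hw.mem_faces hlin (Fin.forall_fin_two.2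
    ⟨fun y hy => mink_kleinLift_nonpos_of_mem_cl hy i,
      fun y hy => mink_kleinLift_nonpos_of_mem_cl hy j⟩)
  rw [Nat.card_fin] at hface
  have hplane : ∀ l, P.faceInHyperplane (![P.e i, P.e j] l)
      {y ∈ P.cl | ∀ k, mink (![P.e i, P.e j] k) (kleinLift y) = 0} := fun l x hx hxF =>
    (mink_kleinLift_kleinMap_eq_zero_iff hx.1.2).1 (hxF.2 l)
  exact hP i j hij ⟨_, hface, hplane 0, hplane 1⟩

lemma exists_chamber (hP : P.IsRightAngled) : ∃ S : Set (Fin P.m), Chamber (fun k : S => P.e k) ∧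
    futureCone n ∩ polyCone (fun k : S => P.e k) ⊆ polyCone P.e := by
  obtain ⟨p, hp, hpe⟩ := exists_interior P
  have hp' : kleinLift p ∈ futureCone n := kleinLift_mem_futureCone.2 (mem_ball_zero_iff.1 hp)
  obtain ⟨S, -, hS, hwall⟩ := exists_irredundant (convex_futureCone (n := n))
    (fun k => minkBilin n (P.e k)) Set.univ hp' fun k _ => hpe k
  have hcut : futureCone n ∩ polyCone (fun k : S => P.e k) ⊆ polyCone P.e := fun x hx k =>
    hS x hx.1 (fun k hk => hx.2 ⟨k, hk⟩) k trivial
  refine ⟨S, ⟨fun k => P.unit k, ⟨_, hp', fun k => hpe k⟩, fun k => ?_, fun i j hij w hw => ?_⟩,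
    hcut⟩
  · obtain ⟨w, hw, hk, hl⟩ := hwall k k.2
    exact ⟨w, hw, hk, fun l hlk => hl l l.2 fun h => hlk (Subtype.ext h)⟩
  · have hij' : i.1 ≠ j := fun h => hij (Subtype.ext h)
    obtain ⟨wi, -, hii, hil⟩ := hwall i i.2
    obtain ⟨wj, -, hjj, hjl⟩ := hwall j j.2
    exact mink_eq_zero_of_isRelInteriorPoint hP hij'
      (linearIndependent_pair_of_mink hii (hil j j.2 hij'.symm).ne (hjl i i.2 hij').ne hjj)
      ⟨hw.mem_futureCone, hw.mink_eq_zero, fun x hx =>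
        (hw.eventually_mem x hx).mono fun ε hε => ⟨hε.1, hcut hε⟩⟩

lemma finite_facets (hn : 2 ≤ n) (P : HypPolyhedron n) : (P.faces (n - 1)).Finite :=
  (Set.finite_range fun k => {y ∈ P.cl | mink (P.e k) (kleinLift y) = 0}).subset fun _ hF =>
    (exists_wall_of_facet hn hF).imp fun _ => Eq.symm

lemma card_facets_le (hn : 2 ≤ n) (P : HypPolyhedron n) : P.a (n - 1) ≤ P.m := by
  choose g hg using fun F : P.faces (n - 1) => exists_wall_of_facet hn F.2
  have hinj : Function.Injective g := fun F F' h => Subtype.ext (by rw [hg F, hg F', h])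
  simpa [HypPolyhedron.a, Nat.card_coe_set_eq] using Nat.card_le_card_of_injective g hinj

lemma card_le_card_facets (hn : 2 ≤ n) (hS : Chamber fun k : S => P.e k)
    (hcut : futureCone n ∩ polyCone (fun k : S => P.e k) ⊆ polyCone P.e) :
    Nat.card S ≤ P.a (n - 1) := by
  let G : Fin P.m → Set (EuclideanSpace ℝ (Fin n)) := fun k =>
    {y ∈ P.cl | mink (P.e k) (kleinLift y) = 0}
  have hmem : ∀ k ∈ S, G k ∈ P.faces (n - 1) := fun k hk => by
    obtain ⟨w, hw, hwS, hwk, hwl⟩ := hS.exists_mem_wall ⟨k, hk⟩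
    have hrel : IsRelInteriorPoint (fun k : S => P.e k) ![P.e k] w :=
      isRelInteriorPoint_of_tight hw hwS (by simpa using hwk) fun l hl => ⟨0, by
        by_contra hne
        exact (hwl l fun h => hne (h ▸ rfl)).ne hl⟩
    have hrelP : IsRelInteriorPoint P.e ![P.e k] w := ⟨hrel.mem_futureCone, hrel.mink_eq_zero,
      fun x hx => (hrel.eventually_mem x hx).mono fun ε hε => ⟨hε.1, hcut hε⟩⟩
    simpa using hrelP.mem_faces
      (linearIndependent_unique_iff.2 (by simpa using ne_zero_of_mink_self_eq_one (P.unit k)))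
      (by simpa using fun y hy => mink_kleinLift_nonpos_of_mem_cl hy k)
  have hinj : Set.InjOn G S := fun k hk l hl hkl => by
    by_contra hne
    obtain ⟨w, hw, hwS, hwk, hwl⟩ := hS.exists_mem_wall ⟨k, hk⟩
    have hw₀ := pos_of_mem_futureCone hw
    have hwG : kleinMap w ∈ G k := ⟨kleinMap_mem_cl hw (hcut ⟨hw, hwS⟩),
      (mink_kleinLift_kleinMap_eq_zero_iff hw₀).2 hwk⟩
    rw [hkl] at hwG
    exact (hwl ⟨l, hl⟩ fun h => hne (congrArg Subtype.val h).symm).ne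
      ((mink_kleinLift_kleinMap_eq_zero_iff hw₀).1 hwG.2)
  rw [Nat.card_coe_set_eq]
  exact Set.ncard_le_ncard_of_injOn G hmem hinj (finite_facets hn P)

end FacetCount

section Existence

variable {n : ℕ} {ι : Type*} [Finite ι]

lemma exists_polyhedron {e : ι → Fin (n + 1) → ℝ} (hunit : ∀ k, mink (e k) (e k) = 1)
    (hint : ∃ p ∈ futureCone n, ∀ k, mink (e k) p < 0) :
    ∃ (P : HypPolyhedron n) (ρ : Fin P.m ≃ ι), P.e = e ∘ ρ := by
  obtain ⟨p, hp, hpe⟩ := hint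
  have hp₀ := pos_of_mem_futureCone hp
  let ρ := (Finite.equivFin ι).symm
  refine ⟨⟨Nat.card ι, e ∘ ρ, fun k => hunit (ρ k), kleinMap p, ?_⟩, ρ, rfl⟩
  rw [image_kleinMap, interior_inter, Metric.isOpen_ball.interior_eq]
  refine ⟨kleinMap_mem_ball hp, mem_interior_kleinPolyhedron fun k => ?_⟩
  rw [mink_kleinLift_kleinMap hp₀.ne']
  exact mul_neg_of_pos_of_neg (inv_pos.2 hp₀) (hpe (ρ k))

lemma nu_le_card_add_ncard_idealPts (hn : 3 ≤ n) {e : ι → Fin (n + 1) → ℝ}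
    (hunit : ∀ k, mink (e k) (e k) = 1) (hint : ∃ p ∈ futureCone n, ∀ k, mink (e k) p < 0)
    (hgram : ∀ i j, i ≠ j → mink (e i) (e j) = 0 ∨ mink (e i) (e j) ≤ -1)
    (hfin : (idealPts e).Finite) (hne : (idealPts e).Nonempty) :
    nu n ≤ Nat.card ι + (idealPts e).ncard := by
  obtain ⟨P, ρ, hP⟩ := exists_polyhedron hunit hint
  have hcone : polyCone P.e = polyCone e := by
    ext x
    simp only [polyCone, hP, Function.comp_apply, Set.mem_ofPred_eq, ρ.forall_congr_left,
      Equiv.apply_symm_apply]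
  have hideal : P.idealVerts = idealPts e := by
    ext y
    rw [idealVerts_eq, mem_idealPts_iff, mem_idealPts_iff, hcone]
  obtain ⟨p, hp, hpe⟩ := hint
  have hfv : P.FiniteVolume := finiteVolume_of_polyCone_subset
    (hcone ▸ polyCone_subset_causalCone (by omega) hfin hp hpe)
  have hra : P.IsRightAngled := isRightAngled_of_gram hn fun i j hij => by
    rw [hP]
    exact hgram _ _ (ρ.injective.ne hij)
  have hnc : ¬ P.IsCompactPoly := fun hcomp => by
    obtain ⟨v, hv⟩ := hideal ▸ hne
    exact (hcomp.2 v hv.1).ne hv.2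
  calc nu n ≤ P.a (n - 1) + P.vInf := Nat.sInf_le ⟨P, hfv, hra, hnc, rfl⟩
    _ ≤ P.m + P.vInf := by gcongr; exact card_facets_le (by omega) P
    _ = Nat.card ι + (idealPts e).ncard := by
      rw [HypPolyhedron.vInf, hideal, ← Nat.card_congr ρ, Nat.card_fin]

end Existence

section Facets

variable {n : ℕ} {ι : Type*}

/-- The indices of the walls orthogonal to the wall `i`. -/
def orthWalls (e : ι → Fin (n + 1) → ℝ) (i : ι) : Set ι := {k | mink (e i) (e k) = 0}

/-- The ideal points lying on the wall `i`, in the Klein model. -/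
def wallIdealPts (e : ι → Fin (n + 1) → ℝ) (i : ι) : Set (EuclideanSpace ℝ (Fin n)) :=
  {y ∈ idealPts e | mink (e i) (kleinLift y) = 0}

lemma wallIdealPts_subset {e : ι → Fin (n + 1) → ℝ} {i : ι} : wallIdealPts e i ⊆ idealPts e :=
  Set.sep_subset _ _

variable [Finite ι] {e : ι → Fin (n + 2) → ℝ}

lemma Chamber.mapsTo_wallIdealPts (h : Chamber e) {i : ι}
    {φ : (Fin (n + 1) → ℝ) →ₗ[ℝ] (Fin (n + 2) → ℝ)} (hφ : IsHyperplaneEmbedding (e i) φ)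
    {u : orthWalls e i → Fin (n + 1) → ℝ} (hu : ∀ k, φ (u k) = e k) :
    Set.MapsTo (fun y => kleinMap (φ (kleinLift y))) (idealPts u) (wallIdealPts e i) := by
  intro y hy
  obtain ⟨hy, hyu⟩ := mem_idealPts_iff.1 hy
  have hlight := (hφ.map_mem_lightCone_iff _).2 hy
  refine ⟨kleinMap_mem_idealPts hlight (h.cut i hlight.2.le (hφ.mink_normal_map _) fun k hk => ?_),
    (mink_kleinLift_kleinMap_eq_zero_iff hlight.1).2 (hφ.mink_normal_map _)⟩
  have hle := hyu ⟨k, hk⟩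
  rwa [← hφ.mink_map, hu] at hle

/-- The facet on the wall `i` is a polyhedron one dimension lower, whose walls are cut out by walls
orthogonal to `i`. -/
lemma Chamber.nu_le_facet (hn : 3 ≤ n) (h : Chamber e) (hfin : (idealPts e).Finite) {i : ι}
    (hne : (wallIdealPts e i).Nonempty) :
    nu n ≤ (orthWalls e i).ncard + (wallIdealPts e i).ncard := by
  obtain ⟨φ, hφ⟩ := exists_isHyperplaneEmbedding (h.unit i)
  choose u hu using fun k : orthWalls e i => (hφ.exists_map_eq_iff (e k)).2 k.2
  have hmink : ∀ (k : orthWalls e i) x, mink (u k) x = mink (e k) (φ x) := fun k x => by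
    rw [← hφ.mink_map, hu]
  have hki : ∀ k : orthWalls e i, k.1 ≠ i := fun k hki => by
    have hk : mink (e i) (e k) = 0 := k.2
    rw [hki, h.unit] at hk
    exact one_ne_zero hk
  obtain ⟨w, hw, hiw, hkw⟩ := h.wall i
  obtain ⟨p, rfl⟩ := (hφ.exists_map_eq_iff w).2 hiw
  have hint : ∃ p ∈ futureCone n, ∀ k, mink (u k) p < 0 :=
    ⟨p, (hφ.map_mem_futureCone_iff p).1 hw, fun k => by rw [hmink]; exact hkw k (hki k)⟩
  have hmaps := h.mapsTo_wallIdealPts hφ hu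
  have hinj := hφ.injOn_kleinMap_map_kleinLift.mono (s₁ := idealPts u) fun y hy =>
    ((hφ.map_mem_lightCone_iff _).2 (mem_idealPts_iff.1 hy).1).1.ne'
  have hwall := hfin.subset (wallIdealPts_subset (i := i))
  have hideal : (idealPts u).Nonempty := by
    obtain ⟨y, hy, hiy⟩ := hne
    obtain ⟨hlight, hcone⟩ := mem_idealPts_iff.1 hy
    obtain ⟨x, hx⟩ := (hφ.exists_map_eq_iff (kleinLift y)).2 hiy
    rw [← hx] at hlight hcone
    exact ⟨kleinMap x, kleinMap_mem_idealPts ((hφ.map_mem_lightCone_iff x).1 hlight) fun k => by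
      rw [hmink]; exact hcone k⟩
  calc nu n ≤ Nat.card (orthWalls e i) + (idealPts u).ncard :=
        nu_le_card_add_ncard_idealPts hn (fun k => by rw [hmink, hu, h.unit]) hint
          (fun k l hkl => by rw [hmink, hu]; exact h.gram fun hkl' => hkl (Subtype.ext hkl'))
          (.of_injOn hmaps hinj hwall) hideal
    _ ≤ (orthWalls e i).ncard + (wallIdealPts e i).ncard :=
        add_le_add (Nat.card_coe_set_eq _).le (Set.ncard_le_ncard_of_injOn _ hmaps hinj hwall)

end Facets

/-! ### Opposite facets at an ideal vertex -/

section OppositeWalls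

variable {n : ℕ} {ι : Type*} {e : ι → Fin (n + 1) → ℝ} {z : Fin (n + 1) → ℝ} {i j : ι}

lemma exists_wall_mink_eq_zero [Finite ι] (hcone : polyCone e ⊆ causalCone n)
    (hz : z ∈ lightCone n) (hze : z ∈ polyCone e) : ∃ i, mink (e i) z = 0 := by
  by_contra! hno
  obtain ⟨ε, hmem, hε⟩ := ((eventually_add_smul_mem_polyCone (x := -kleinLift 0) hze
    fun k hk => absurd hk (hno k)).and self_mem_nhdsWithin).exists
  have hle : ‖spatial (z + ε • -kleinLift (0 : EuclideanSpace ℝ (Fin n)))‖ ≤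
      (z + ε • -kleinLift (0 : EuclideanSpace ℝ (Fin n))) 0 := hcone hmem
  simp only [map_add, map_smul, map_neg, spatial_kleinLift, neg_zero, smul_zero, add_zero, hz.2,
    Pi.add_apply, Pi.smul_apply, Pi.neg_apply, kleinLift_zero, smul_eq_mul] at hle
  linarith [show 0 < ε from hε]

/-- Moving from `z` against the normal of a wall orthogonal to all the others would leave the
causal cone. -/
lemma exists_nonorthogonal_wall [Finite ι] (hcone : polyCone e ⊆ causalCone n)
    (hunit : mink (e i) (e i) = 1) (hz : z ∈ lightCone n) (hze : z ∈ polyCone e)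
    (hi : mink (e i) z = 0) : ∃ j ≠ i, mink (e j) z = 0 ∧ mink (e i) (e j) ≠ 0 := by
  by_contra! hno
  have htight : ∀ k, mink (e k) z = 0 → mink (e k) (-e i) ≤ 0 := fun k hk => by
    rw [mink_neg_right, neg_nonpos, mink_comm]
    rcases eq_or_ne k i with rfl | hki
    · exact hunit ▸ zero_le_one
    · exact (hno k hki hk).ge
  obtain ⟨ε, hmem, hε⟩ :=
    ((eventually_add_smul_mem_polyCone hze htight).and self_mem_nhdsWithin).exists
  have hself : mink (z + ε • -e i) (z + ε • -e i) = ε ^ 2 := by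
    simp only [mink_add_left, mink_add_right, mink_smul_left, mink_smul_right, mink_neg_left,
      mink_neg_right, mink_comm z (e i), hi, hunit, mink_self_of_mem_lightCone hz]
    ring
  exact (mink_self_nonpos (hcone hmem)).not_gt (hself ▸ pow_pos hε 2)

/-- Two walls tangent to each other at the ideal point of the null vector `z`. -/
structure AreTangentAt (e : ι → Fin (n + 1) → ℝ) (i j : ι) (z : Fin (n + 1) → ℝ) : Prop where
  left : mink (e i) z = 0
  right : mink (e j) z = 0
  exists_add_eq_smul : ∃ c : ℝ, c ≠ 0 ∧ e i + e j = c • z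

lemma Chamber.exists_areTangentAt [Finite ι] (h : Chamber e) (hcone : polyCone e ⊆ causalCone n)
    (hz : z ∈ lightCone n) (hze : z ∈ polyCone e) : ∃ i j, AreTangentAt e i j z := by
  obtain ⟨i, hi⟩ := exists_wall_mink_eq_zero hcone hz hze
  obtain ⟨j, hji, hj, hij⟩ := exists_nonorthogonal_wall hcone (h.unit i) hz hze hi
  obtain ⟨c, hc⟩ := exists_add_eq_smul hz hi hj (h.unit i) (h.unit j)
    ((h.gram hji.symm).resolve_left hij)
  refine ⟨i, j, hi, hj, c, ?_, hc⟩
  rintro rfl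
  obtain ⟨p, -, hpe⟩ := h.interior
  have hsum : mink (e i + e j) p = 0 := by rw [hc, zero_smul, mink_zero_left]
  rw [mink_add_left] at hsum
  linarith [hpe i, hpe j]

namespace AreTangentAt

lemma mink_eq_zero (h : AreTangentAt e i j z) {x : Fin (n + 1) → ℝ} (hi : mink (e i) x = 0)
    (hj : mink (e j) x = 0) : mink x z = 0 := by
  obtain ⟨c, hc, hsum⟩ := h.exists_add_eq_smul
  have hx : mink (e i + e j) x = 0 := by rw [mink_add_left, hi, hj, add_zero]
  rw [hsum, mink_smul_left, mink_comm] at hx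
  exact (mul_eq_zero.1 hx).resolve_left hc

lemma mink_eq_neg_one (h : AreTangentAt e i j z) (hunit : mink (e i) (e i) = 1) :
    mink (e i) (e j) = -1 := by
  obtain ⟨c, -, hsum⟩ := h.exists_add_eq_smul
  have hi : mink (e i) (e i + e j) = 0 := by rw [hsum, mink_smul_right, h.left, mul_zero]
  rw [mink_add_right, hunit] at hi
  linarith

lemma symm (h : AreTangentAt e i j z) : AreTangentAt e j i z :=
  ⟨h.right, h.left, add_comm (e i) (e j) ▸ h.exists_add_eq_smul⟩

lemma wallIdealPts_inter_subset {v : EuclideanSpace ℝ (Fin n)}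
    (h : AreTangentAt e i j (kleinLift v)) (hv : v ∈ idealPts e) :
    wallIdealPts e i ∩ wallIdealPts e j ⊆ {v} := by
  rintro y ⟨⟨hy, hyi⟩, -, hyj⟩
  have hlift := congrArg kleinMap (eq_smul_of_mink_self_eq_zero (mem_idealPts_iff.1 hv).1
    (h.mink_eq_zero hyi hyj) (mink_self_of_mem_lightCone (mem_idealPts_iff.1 hy).1))
  rwa [kleinMap_smul (by simp), kleinMap_kleinLift, kleinMap_kleinLift] at hlift

lemma ncard_orthWalls_union_add_two_le [Finite ι] (h : AreTangentAt e i j z)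
    (hunit : ∀ k, mink (e k) (e k) = 1) :
    (orthWalls e i ∪ orthWalls e j).ncard + 2 ≤ Nat.card ι := by
  have hij := h.mink_eq_neg_one (hunit i)
  have hji := h.symm.mink_eq_neg_one (hunit j)
  have hne : i ≠ j := by
    rintro rfl
    rw [hunit] at hij
    norm_num at hij
  have hdisj : Disjoint (orthWalls e i ∪ orthWalls e j) {i, j} := by
    rw [Set.disjoint_right]
    rintro k (rfl | rfl) <;> simp [orthWalls, hunit, hij, hji]
  rw [← Set.ncard_pair hne, ← Set.ncard_union_eq hdisj]
  exact Set.ncard_le_card _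

lemma ncard_orthWalls_inter_add_four_le [Finite ι] (h : AreTangentAt e i j z) (hC : Chamber e)
    (hz : z ∈ lightCone n) : (orthWalls e i ∩ orthWalls e j).ncard + 4 ≤ 2 * n :=
  ncard_tight_add_four_le hz hC.unit (fun _ _ hkl => hC.gram hkl) h.left
    (fun _ hk => h.mink_eq_zero hk.1 hk.2) fun _ hk => hk.1

end AreTangentAt

end OppositeWalls

lemma Chamber.two_mul_nu_add_five_le {d : ℕ} (hd : 3 ≤ d) {ι : Type*} [Finite ι]
    {e : ι → Fin (d + 2) → ℝ} (h : Chamber e) (hfin : (idealPts e).Finite)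
    (hne : (idealPts e).Nonempty) :
    2 * nu d + 5 ≤ Nat.card ι + (idealPts e).ncard + 2 * (d + 1) := by
  obtain ⟨v, hv⟩ := hne
  obtain ⟨hlight, hmem⟩ := mem_idealPts_iff.1 hv
  obtain ⟨p, hp, hpe⟩ := h.interior
  obtain ⟨i, j, hij⟩ := h.exists_areTangentAt
    (polyCone_subset_causalCone (by omega) hfin hp hpe) hlight hmem
  have hfacet_i := h.nu_le_facet hd hfin ⟨v, hv, hij.left⟩
  have hfacet_j := h.nu_le_facet hd hfin ⟨v, hv, hij.right⟩
  have hwalls := Set.ncard_union_add_ncard_inter (orthWalls e i) (orthWalls e j)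
  have hwalls_union := hij.ncard_orthWalls_union_add_two_le h.unit
  have hwalls_inter := hij.ncard_orthWalls_inter_add_four_le h hlight
  have hpts := Set.ncard_union_add_ncard_inter (wallIdealPts e i) (wallIdealPts e j)
    (hfin.subset wallIdealPts_subset) (hfin.subset wallIdealPts_subset)
  have hpts_union : (wallIdealPts e i ∪ wallIdealPts e j).ncard ≤ (idealPts e).ncard :=
    Set.ncard_le_ncard (Set.union_subset wallIdealPts_subset wallIdealPts_subset) hfin
  have hpts_inter : (wallIdealPts e i ∩ wallIdealPts e j).ncard ≤ 1 :=
    (Set.ncard_le_ncard (hij.wallIdealPts_inter_subset hv)).trans (Set.ncard_singleton v).le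
  omega

section Recursion

variable {n : ℕ} {P : HypPolyhedron n}

lemma idealPts_nonempty (hfv : P.FiniteVolume) (hnc : ¬ P.IsCompactPoly) :
    (idealPts P.e).Nonempty := by
  by_contra hempty
  rw [← idealVerts_eq, Set.not_nonempty_iff_eq_empty] at hempty
  exact hnc ⟨hfv, fun v hv => (norm_le_one_of_mem_cl (hv.subset rfl)).lt_of_ne fun hv₁ =>
    Set.eq_empty_iff_forall_notMem.1 hempty v ⟨hv, hv₁⟩⟩

lemma idealPts_finite (hfv : P.FiniteVolume) : (idealPts P.e).Finite :=
  idealVerts_eq P ▸ hfv.1.subset (Set.sep_subset _ _)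

lemma idealPts_eq_of_futureCone_inter_subset {S : Set (Fin P.m)}
    (hS : Chamber fun k : S => P.e k)
    (hcut : futureCone n ∩ polyCone (fun k : S => P.e k) ⊆ polyCone P.e) :
    idealPts (fun k : S => P.e k) = idealPts P.e := by
  obtain ⟨p, hp, hpe⟩ := hS.interior
  refine Set.Subset.antisymm (fun y hy => ⟨hy.1, fun k => ?_⟩) fun y hy => ⟨hy.1, fun k => hy.2 k⟩
  obtain ⟨hlight, hmem⟩ := mem_idealPts_iff.1 hy
  refine mink_nonpos_of_forall_add_smul (w := p) fun t ht =>
    hcut ⟨add_smul_mem_futureCone hlight.2.le hp ht, fun l => ?_⟩ k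
  rw [mink_add_right]
  exact add_nonpos (hmem l) (smul_mem_polyCone (fun l => (hpe l).le) ht.le l)

lemma two_mul_nu_add_five_le {d : ℕ} (hd : 3 ≤ d) {P : HypPolyhedron (d + 1)}
    (hfv : P.FiniteVolume) (hra : P.IsRightAngled) (hnc : ¬ P.IsCompactPoly) :
    2 * nu d + 5 ≤ P.a d + P.vInf + 2 * (d + 1) := by
  obtain ⟨S, hS, hcut⟩ := exists_chamber hra
  have hideal := idealPts_eq_of_futureCone_inter_subset hS hcut
  have hchamber := hS.two_mul_nu_add_five_le hd (hideal ▸ idealPts_finite hfv)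
    (hideal ▸ idealPts_nonempty hfv hnc)
  have hfacets : Nat.card S ≤ P.a d := card_le_card_facets (by omega) hS hcut
  rw [hideal, ← idealVerts_eq] at hchamber
  change 2 * nu d + 5 ≤ P.a d + P.idealVerts.ncard + 2 * (d + 1)
  omega

/-- In the plane the `(n - 2)`-faces are the vertices, and an ideal vertex contains no point of the
carrier: `faceInHyperplane` holds for it vacuously, so `IsRightAngled` makes any two sides
orthogonal as soon as there is an ideal vertex. -/
lemma nuSet_two : nuSet 2 = ∅ := by
  refine Set.eq_empty_iff_forall_notMem.2 ?_
  rintro m ⟨P, hfv, hra, hnc, -⟩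
  obtain ⟨v, hv⟩ := idealPts_nonempty hfv hnc
  obtain ⟨hlight, hmem⟩ := mem_idealPts_iff.1 hv
  obtain ⟨p, hp, hpe⟩ := exists_interior P
  have hcone := polyCone_subset_causalCone le_rfl (idealPts_finite hfv)
    (kleinLift_mem_futureCone.2 (mem_ball_zero_iff.1 hp)) hpe
  obtain ⟨i, hi⟩ := exists_wall_mink_eq_zero hcone hlight hmem
  obtain ⟨j, hji, -, hij⟩ := exists_nonorthogonal_wall hcone (P.unit i) hlight hmem hi
  have hplane : ∀ e, P.faceInHyperplane e {v} := fun e x hx hxv => by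
    have hball := kleinMap_mem_ball (hyperboloid_subset_futureCone hx.1)
    rw [Set.mem_singleton_iff.1 hxv, mem_ball_zero_iff] at hball
    exact absurd (mem_sphere_zero_iff_norm.1 hv.1) hball.ne
  have hvert : v ∈ P.idealVerts := idealVerts_eq P ▸ hv
  have hdim : sdim {v} = 0 := by rw [sdim, vectorSpan_singleton, finrank_bot]
  exact hij (hra i j hji.symm
    ⟨{v}, ⟨hvert.1, Set.singleton_nonempty v, hdim⟩, hplane _, hplane _⟩)

lemma five_sub_two_mul_add_le (hn : 3 ≤ n) (hfv : P.FiniteVolume) (hra : P.IsRightAngled)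
    (hnc : ¬ P.IsCompactPoly) :
    (5 : ℤ) - 2 * (n : ℤ) + 2 * (nu (n - 1) : ℤ) ≤ (P.a (n - 1) : ℤ) + (P.vInf : ℤ) := by
  obtain ⟨d, rfl⟩ : ∃ d, n = d + 1 := ⟨n - 1, by omega⟩
  rw [Nat.add_sub_cancel]
  rcases Nat.lt_or_ge d 3 with hd | hd
  · obtain rfl : d = 2 := by omega
    have hnu : nu 2 = 0 := by rw [nu, nuSet_two, Nat.sInf_empty]
    omega
  · have hbound := two_mul_nu_add_five_le hd hfv hra hnc
    omega

end Recursion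

end Hyperbolic

/-- For `n ≥ 3` and every finite-volume non-compact right-angled convex hyperbolic
`n`-polyhedron `P`, `ν(P) = a_{n-1}(P) + v_∞(P) ≥ 5 - 2n + 2ν_{n-1}`; in particular
`νₙ ≥ 5 - 2n + 2ν_{n-1}`. -/
theorem nu_recursion (n : ℕ) (hn : 3 ≤ n) (P : HypPolyhedron n)
    (hfv : P.FiniteVolume) (hra : P.IsRightAngled) (hnc : ¬ P.IsCompactPoly) :
    ((5 : ℤ) - 2 * (n : ℤ) + 2 * (nu (n - 1) : ℤ) ≤ (P.a (n - 1) : ℤ) + (P.vInf : ℤ)) ∧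
      ((5 : ℤ) - 2 * (n : ℤ) + 2 * (nu (n - 1) : ℤ) ≤ (nu n : ℤ)) := by
  refine ⟨Hyperbolic.five_sub_two_mul_add_le hn hfv hra hnc, ?_⟩
  obtain ⟨Q, hQfv, hQra, hQnc, hQ⟩ : nu n ∈ nuSet n :=
    Nat.sInf_mem ⟨_, P, hfv, hra, hnc, rfl⟩
  rw [← hQ, Nat.cast_add]
  exact Hyperbolic.five_sub_two_mul_add_le hn hQfv hQra hQnc
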